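/- arXiv:2308.09384 — 5 statements merged into one kernel-verified Lean document; each statement's English description precedes it below -/
import Mathlib

section
/- Let R be an integral domain with trivial Jacobson radical, let X = Specm(R) be its set of maximal ideals, and for r ∈ R let X_r = {m ∈ X : r ∉ m}. Then (a) the collection F = {Z ⊆ X : X_r ⊆ Z for some r ∈ R \ {0}} is a filter on X, and (b) for any ultrafilter U on X containing F, the canonical ring homomorphism R → ∏_U R/m (sending r to the class of (r mod m)_{m∈X}) is injective, so the ultraproduct ∏_U R/m contains the fraction field of R. -/
/-- Given a filter `F` on an index set `X` and a family of commutative rings `S j`, the ideal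
`I_F` of the product ring `∏ j, S j` consisting of the families whose zero set belongs to
`F`.  The ultraproduct `∏_F S j` is the quotient of `∏ j, S j` by this ideal. -/
def ultraIdeal {X : Type*} (F : Filter X) (S : X → Type*) [∀ j, CommRing (S j)] :
    Ideal (∀ j, S j) where
  carrier := {s | {j | s j = 0} ∈ F}
  add_mem' := by
    intro a b ha hb
    refine Filter.mem_of_superset (Filter.inter_mem ha hb) ?_
    intro j hj
    have h1 : a j = 0 := hj.1
    have h2 : b j = 0 := hj.2
    simp [Set.mem_setOf_eq, h1, h2]
  zero_mem' := by
    have : {j | (0 : ∀ j, S j) j = 0} = Set.univ := by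
      ext j; simp
    rw [Set.mem_setOf_eq, this]
    exact Filter.univ_mem
  smul_mem' := by
    intro c a ha
    refine Filter.mem_of_superset ha ?_
    intro j hj
    have h1 : a j = 0 := hj
    simp [Set.mem_setOf_eq, h1]

/-- The collection `F = {Z ⊆ Specm(R) : X_r ⊆ Z for some r ∈ R \ {0}}`, where
`X_r = {m : r ∉ m}`. -/
def specmCofilter (R : Type*) [CommRing R] : Set (Set (MaximalSpectrum R)) :=
  {Z | ∃ r : R, r ≠ 0 ∧ {m : MaximalSpectrum R | r ∉ m.asIdeal} ⊆ Z}

/-!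
Let `F` be a proper filter containing every `X_r` with `r ≠ 0`. On `X_r` the residue of `r` is a
nonzero element of a field, so `r` is invertible at `F`-almost every maximal ideal, and inverting it
pointwise shows that it is a unit of `∏_F R/m`. Since `∏_F R/m` is not the zero ring, `R → ∏_F R/m`
is injective and extends to the fraction field of `R` by the universal property of localization.
-/

section Ultraproduct

open Filter

variable {X : Type*} {F : Filter X}

section Family

variable {S : X → Type*} [∀ j, CommRing (S j)]

theorem mem_ultraIdeal {s : ∀ j, S j} : s ∈ ultraIdeal F S ↔ ∀ᶠ j in F, s j = 0 :=
  Iff.rfl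

theorem nontrivial_quotient_ultraIdeal [F.NeBot] [∀ j, Nontrivial (S j)] :
    Nontrivial ((∀ j, S j) ⧸ ultraIdeal F S) := by
  rw [Ideal.Quotient.nontrivial_iff, Ideal.ne_top_iff_one, mem_ultraIdeal]
  simpa using NeBot.ne ‹F.NeBot›

theorem isUnit_mk_ultraIdeal {s : ∀ j, S j} (hs : ∀ᶠ j in F, IsUnit (s j)) :
    IsUnit (Ideal.Quotient.mk (ultraIdeal F S) s) := by
  refine .of_mul_eq_one (Ideal.Quotient.mk _ fun j => Ring.inverse (s j)) ?_
  rw [← map_mul, ← map_one (Ideal.Quotient.mk _), Ideal.Quotient.eq, mem_ultraIdeal]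
  filter_upwards [hs] with j hj
  exact sub_eq_zero.2 (Ring.mul_inverse_cancel _ hj)

end Family

variable {R : Type*} [CommRing R] {I : X → Ideal R}

/-- The canonical ring homomorphism `R → ∏_F R/I_j` attached to a family of ideals `I_j`, sending
`r` to the class of `(r mod I_j)_j`. -/
def toUltraproduct (F : Filter X) (I : X → Ideal R) :
    R →+* (∀ j, R ⧸ I j) ⧸ ultraIdeal F fun j => R ⧸ I j :=
  (Ideal.Quotient.mk _).comp (RingHom.pi fun j => Ideal.Quotient.mk (I j))

theorem isUnit_toUltraproduct [∀ j, (I j).IsMaximal] {r : R} (hr : ∀ᶠ j in F, r ∉ I j) :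
    IsUnit (toUltraproduct F I r) := by
  refine isUnit_mk_ultraIdeal ?_
  filter_upwards [hr] with j hj
  let := Ideal.Quotient.field (I j)
  exact IsUnit.mk0 _ (mt Ideal.Quotient.eq_zero_iff_mem.1 hj)

end Ultraproduct

section FractionField

variable {R A : Type*} [CommRing R] [CommRing A] [Nontrivial A] {f : R →+* A}

theorem injective_of_forall_ne_zero_isUnit (hf : ∀ r, r ≠ 0 → IsUnit (f r)) :
    Function.Injective f :=
  (injective_iff_map_eq_zero f).2 fun r hr => by_contra fun hr0 => (hf r hr0).ne_zero hr

theorem exists_injective_extension_of_forall_ne_zero_isUnit (hf : ∀ r, r ≠ 0 → IsUnit (f r))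
    (K : Type*) [Field K] [Algebra R K] [IsFractionRing R K] :
    ∃ emb : K →+* A, Function.Injective emb ∧ ∀ r, emb (algebraMap R K r) = f r := by
  have := (algebraMap R K).domain_nontrivial
  have isUnit_map (r : nonZeroDivisors R) : IsUnit (f r) := hf r (nonZeroDivisors.ne_zero r.2)
  exact ⟨IsLocalization.lift isUnit_map, RingHom.injective _, IsLocalization.lift_eq isUnit_map⟩

end FractionField

section MaximalSpectrum

theorem mem_jacobson_bot_iff_forall_maximalSpectrum {R : Type*} [CommRing R] {r : R} :
    r ∈ (⊥ : Ideal R).jacobson ↔ ∀ m : MaximalSpectrum R, r ∈ m.asIdeal := by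
  rw [Ideal.jacobson, Ideal.mem_sInf]
  exact ⟨fun h m => h ⟨bot_le, m.isMaximal⟩, fun h J hJ => h ⟨J, hJ.2⟩⟩

theorem empty_notMem_specmCofilter_iff {R : Type*} [CommRing R] :
    ∅ ∉ specmCofilter R ↔ (⊥ : Ideal R).jacobson = ⊥ := by
  simp only [specmCofilter, Set.mem_ofPred_eq, Set.subset_empty_iff, Set.eq_empty_iff_forall_notMem,
    not_not, ← mem_jacobson_bot_iff_forall_maximalSpectrum, Submodule.eq_bot_iff]
  grind

variable (R : Type*) [CommRing R] [IsDomain R]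

/-- The collection `specmCofilter R` as a `Filter`. Mathlib's filters may contain `∅`, so properness
is a separate matter. -/
def specmFilter : Filter (MaximalSpectrum R) where
  sets := specmCofilter R
  univ_sets := ⟨1, one_ne_zero, Set.subset_univ _⟩
  sets_of_superset := fun ⟨r, hr, hrZ⟩ hZ => ⟨r, hr, hrZ.trans hZ⟩
  inter_sets := by
    rintro Z₁ Z₂ ⟨r, hr, hrZ⟩ ⟨s, hs, hsZ⟩
    exact ⟨r * s, mul_ne_zero hr hs, fun m hm =>
      ⟨hrZ (mt (m.asIdeal.mul_mem_right s) hm), hsZ (mt (m.asIdeal.mul_mem_left r) hm)⟩⟩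

theorem specmFilter_neBot_iff : (specmFilter R).NeBot ↔ (⊥ : Ideal R).jacobson = ⊥ := by
  rw [← empty_notMem_specmCofilter_iff, Filter.neBot_iff, Ne, ← Filter.empty_mem_iff_bot]
  rfl

variable {R} in
theorem eventually_specmFilter_notMem {r : R} (hr : r ≠ 0) :
    ∀ᶠ m in specmFilter R, r ∉ m.asIdeal :=
  ⟨r, hr, subset_rfl⟩

theorem specm_ultraproduct_contains_fraction_field_general
    (K : Type*) [Field K] [Algebra R K] [IsFractionRing R K] :
    ((specmFilter R).NeBot ↔ (⊥ : Ideal R).jacobson = ⊥) ∧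
    ∀ (F : Filter (MaximalSpectrum R)) [F.NeBot], F ≤ specmFilter R →
      Function.Injective (toUltraproduct F MaximalSpectrum.asIdeal) ∧
      ∃ emb : K →+* (∀ m : MaximalSpectrum R, R ⧸ m.asIdeal) ⧸ ultraIdeal F fun m => R ⧸ m.asIdeal,
        Function.Injective emb ∧
        ∀ r : R, emb (algebraMap R K r) = toUltraproduct F MaximalSpectrum.asIdeal r := by
  refine ⟨specmFilter_neBot_iff R, fun F _ hF => ?_⟩
  have isMaximal (m : MaximalSpectrum R) : m.asIdeal.IsMaximal := m.isMaximal
  have nontrivial_ultraproduct := nontrivial_quotient_ultraIdeal (F := F)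
    (S := fun m : MaximalSpectrum R => R ⧸ m.asIdeal)
  have isUnit_image (r : R) (hr : r ≠ 0) : IsUnit (toUltraproduct F MaximalSpectrum.asIdeal r) :=
    isUnit_toUltraproduct (hF (eventually_specmFilter_notMem hr))
  exact ⟨injective_of_forall_ne_zero_isUnit isUnit_image,
    exists_injective_extension_of_forall_ne_zero_isUnit isUnit_image K⟩

end MaximalSpectrum

/-- Let `R` be an integral domain with trivial Jacobson radical, let
`X = Specm(R)` and for `r ∈ R` let `X_r = {m ∈ X : r ∉ m}`.  Then (a) the collection
`F = {Z ⊆ X : X_r ⊆ Z for some r ≠ 0}` is a filter on `X` (it does not contain `∅` and is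
closed under intersections and supersets), and (b) for every ultrafilter `U` on `X`
containing `F`, the canonical ring homomorphism `R → ∏_U R/m` is injective, so the
ultraproduct `∏_U R/m` contains the fraction field of `R`. -/
theorem specm_ultraproduct_contains_fraction_field (R : Type*) [CommRing R] [IsDomain R]
    (hJ : (⊥ : Ideal R).jacobson = ⊥) :
    (∅ ∉ specmCofilter R)
    ∧ (∀ Z₁ Z₂, Z₁ ∈ specmCofilter R → Z₂ ∈ specmCofilter R → Z₁ ∩ Z₂ ∈ specmCofilter R)
    ∧ (∀ Z₁ Z₂, Z₁ ∈ specmCofilter R → Z₁ ⊆ Z₂ → Z₂ ∈ specmCofilter R)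
    ∧ (∀ U : Ultrafilter (MaximalSpectrum R), (∀ Z ∈ specmCofilter R, Z ∈ U) →
        (Function.Injective (fun r : R =>
          Ideal.Quotient.mk (ultraIdeal (U : Filter (MaximalSpectrum R))
              (fun m : MaximalSpectrum R => R ⧸ m.asIdeal))
            (fun m : MaximalSpectrum R => Ideal.Quotient.mk m.asIdeal r))
        ∧ ∃ emb : FractionRing R →+*
            ((∀ m : MaximalSpectrum R, R ⧸ m.asIdeal) ⧸
              ultraIdeal (U : Filter (MaximalSpectrum R))
                (fun m : MaximalSpectrum R => R ⧸ m.asIdeal)),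
          Function.Injective emb ∧
          ∀ r : R, emb (algebraMap R (FractionRing R) r) =
            Ideal.Quotient.mk (ultraIdeal (U : Filter (MaximalSpectrum R))
                (fun m : MaximalSpectrum R => R ⧸ m.asIdeal))
              (fun m : MaximalSpectrum R => Ideal.Quotient.mk m.asIdeal r))) := by
  obtain ⟨neBot_iff, embeds⟩ :=
    specm_ultraproduct_contains_fraction_field_general R (FractionRing R)
  have := neBot_iff.2 hJ
  exact ⟨Filter.empty_notMem (specmFilter R), fun _ _ => (specmFilter R).inter_sets,
    fun _ _ => (specmFilter R).sets_of_superset, fun U hU => embeds U hU⟩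
end

section
/- Let R be a commutative ring of prime characteristic p and A = A_n(R) the n-th Weyl algebra over R. Then the center of A is equal to the subalgebra C = R[x_1^p, …, x_n^p, ∂_1^p, …, ∂_n^p]. -/
/-- The commutation relations defining the `n`-th Weyl algebra over `R`:
`[x_i, x_j] = 0`, `[∂_i, ∂_j] = 0`, `[∂_i, x_j] = δ_{ij}`.  Generators are indexed by
`Fin n ⊕ Fin n`, with `.inl i` corresponding to `x_i` and `.inr i` to `∂_i`. -/
inductive WeylRel (R : Type*) [CommRing R] (n : ℕ) :
    FreeAlgebra R (Fin n ⊕ Fin n) → FreeAlgebra R (Fin n ⊕ Fin n) → Prop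
  | xx (i j : Fin n) : WeylRel R n
      (FreeAlgebra.ι R (.inl i) * FreeAlgebra.ι R (.inl j))
      (FreeAlgebra.ι R (.inl j) * FreeAlgebra.ι R (.inl i))
  | dd (i j : Fin n) : WeylRel R n
      (FreeAlgebra.ι R (.inr i) * FreeAlgebra.ι R (.inr j))
      (FreeAlgebra.ι R (.inr j) * FreeAlgebra.ι R (.inr i))
  | dx (i j : Fin n) : WeylRel R n
      (FreeAlgebra.ι R (.inr i) * FreeAlgebra.ι R (.inl j))
      (FreeAlgebra.ι R (.inl j) * FreeAlgebra.ι R (.inr i) + if i = j then 1 else 0)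

/-- The `n`-th Weyl algebra `A_n(R)` over a commutative ring `R`, as the quotient of the
free `R`-algebra on `x_1, …, x_n, ∂_1, …, ∂_n` by the Weyl relations. -/
abbrev WeylAlgebra (R : Type*) [CommRing R] (n : ℕ) : Type _ := RingQuot (WeylRel R n)

/-- The generator `x_i` of the Weyl algebra. -/
noncomputable def wX (R : Type*) [CommRing R] {n : ℕ} (i : Fin n) : WeylAlgebra R n :=
  RingQuot.mkAlgHom R (WeylRel R n) (FreeAlgebra.ι R (.inl i))

/-- The generator `∂_i` of the Weyl algebra. -/
noncomputable def wD (R : Type*) [CommRing R] {n : ℕ} (i : Fin n) : WeylAlgebra R n :=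
  RingQuot.mkAlgHom R (WeylRel R n) (FreeAlgebra.ι R (.inr i))

/-- The set `{x_1^p, …, x_n^p, ∂_1^p, …, ∂_n^p}` of `p`-th powers of the generators, so that
`Algebra.adjoin R (pPowSet R n p)` is the subalgebra `C = R[x_1^p, …, x_n^p, ∂_1^p, …, ∂_n^p]`. -/
def pPowSet (R : Type*) [CommRing R] (n p : ℕ) : Set (WeylAlgebra R n) :=
  (Set.range fun i : Fin n => wX R i ^ p) ∪ (Set.range fun i : Fin n => wD R i ^ p)

/-!
Putting every `x` to the left of every `∂` gives an `R`-linear map `ν : R[x, ξ] → A_n(R)`.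
It is onto because its image is a left ideal containing `1`. It is injective because `A_n(R)` acts
on `R[x, ξ]` with `x_i` acting as multiplication by `x_i` and `∂_i` as `ξ_i + ∂/∂x_i`, and then
`ν f` sends `1` to `f`. Under `ν`, bracketing with `∂_i` and with `-x_i` becomes `∂/∂x_i` and
`∂/∂ξ_i`, so the center corresponds to the polynomials all of whose partial derivatives vanish; in
prime characteristic `p` these are the polynomials in the `p`-th powers of the variables.
-/

open MvPolynomial TensorProduct

attribute [local instance] LieRing.ofAssociativeRing

section CommutingFamilies

theorem lie_mul_eq_lie_mul_add_mul_lie {A : Type*} [Ring A] (a b c : A) :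
    ⁅a, b * c⁆ = ⁅a, b⁆ * c + b * ⁅a, c⁆ := by
  simp only [Ring.lie_def]
  noncomm_ring

variable {R A σ : Type*} [CommSemiring R] [Ring A] [Algebra R A] (g : σ → A)
  (hg : ∀ i j, Commute (g i) (g j))

open scoped IsMulCommutative in
/-- Evaluation of polynomials at a family `g` of pairwise commuting elements of an algebra which
need not be commutative: `MvPolynomial.aeval` into the commutative subalgebra generated by `g`. -/
noncomputable def aevalOfCommute : MvPolynomial σ R →ₐ[R] A :=
  have : IsMulCommutative (Algebra.adjoin R (Set.range g)) :=
    Algebra.isMulCommutative_adjoin R (by rintro _ ⟨i, rfl⟩ _ ⟨j, rfl⟩; exact hg i j)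
  (Algebra.adjoin R (Set.range g)).val.comp
    (aeval fun i => ⟨g i, Algebra.subset_adjoin (Set.mem_range_self i)⟩)

@[simp]
theorem aevalOfCommute_X (i : σ) : aevalOfCommute (R := R) g hg (X i) = g i := by
  simp [aevalOfCommute]

theorem aevalOfCommute_expand_mem_adjoin (p : ℕ) (f : MvPolynomial σ R) :
    aevalOfCommute g hg (expand p f) ∈ Algebra.adjoin R (Set.range fun i => g i ^ p) := by
  induction f using MvPolynomial.induction_on with
  | C r => simp [← algebraMap_eq]
  | add f₁ f₂ h₁ h₂ => simpa only [map_add] using add_mem h₁ h₂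
  | mul_X f i hf =>
    rw [map_mul, map_mul, expand_X, map_pow, aevalOfCommute_X]
    exact mul_mem hf (Algebra.subset_adjoin ⟨i, rfl⟩)

theorem lie_aevalOfCommute_eq_aevalOfCommute_pderiv [DecidableEq σ] {d : A} {i : σ}
    (hd : ∀ j, ⁅d, g j⁆ = Pi.single (M := fun _ => A) i 1 j) (f : MvPolynomial σ R) :
    ⁅d, aevalOfCommute g hg f⁆ = aevalOfCommute g hg (pderiv i f) := by
  induction f using MvPolynomial.induction_on with
  | C r =>
    rw [pderiv_C, map_zero, ← algebraMap_eq, AlgHom.commutes, ← commute_iff_lie_eq]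
    exact (Algebra.commutes r d).symm
  | add f₁ f₂ h₁ h₂ => simp only [lie_add, map_add, h₁, h₂]
  | mul_X f j hf =>
    have h_single : aevalOfCommute g hg (Pi.single (M := fun _ => MvPolynomial σ R) i 1 j) =
        Pi.single (M := fun _ => A) i 1 j := by
      rw [Pi.single_apply, Pi.single_apply]
      split_ifs <;> simp
    rw [map_mul, lie_mul_eq_lie_mul_add_mul_lie, hf, aevalOfCommute_X, hd, pderiv_mul, map_add,
      map_mul, map_mul, aevalOfCommute_X, pderiv_X, h_single]

end CommutingFamilies

section Polynomials

variable {R σ τ : Type*} [CommSemiring R]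

theorem tensorEquivSum_tmul (f : MvPolynomial σ R) (h : MvPolynomial τ R) :
    tensorEquivSum R σ τ R (f ⊗ₜ h) = rename Sum.inl f * rename Sum.inr h := by
  have h_left : (tensorEquivSum R σ τ R).toAlgHom.comp Algebra.TensorProduct.includeLeft =
      rename Sum.inl := by ext; simp
  have h_right : (tensorEquivSum R σ τ R).toAlgHom.comp Algebra.TensorProduct.includeRight =
      rename Sum.inr := by ext; simp
  rw [← h_left, ← h_right]
  simp [← map_mul]

theorem induction_on_rename_mul_rename {P : MvPolynomial (σ ⊕ τ) R → Prop}
    (add : ∀ f₁ f₂, P f₁ → P f₂ → P (f₁ + f₂))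
    (mul : ∀ (f : MvPolynomial σ R) (h : MvPolynomial τ R),
      P (rename Sum.inl f * rename Sum.inr h)) (f : MvPolynomial (σ ⊕ τ) R) : P f := by
  obtain ⟨t, rfl⟩ := (tensorEquivSum R σ τ R).surjective f
  induction t using TensorProduct.induction_on with
  | zero => simpa using mul 0 0
  | tmul f h => simpa only [tensorEquivSum_tmul] using mul f h
  | add t₁ t₂ h₁ h₂ => simpa only [map_add] using add _ _ h₁ h₂

theorem pderiv_rename_of_notMem_range {i : τ} {e : σ → τ} (hi : i ∉ Set.range e)
    (f : MvPolynomial σ R) : pderiv i (rename e f) = 0 := by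
  classical
  refine pderiv_eq_zero_of_notMem_vars fun hmem => ?_
  obtain ⟨j, -, rfl⟩ := Finset.mem_image.mp (vars_rename e f hmem)
  exact hi ⟨j, rfl⟩

theorem pderiv_X_pow_char (p : ℕ) [CharP R p] (i j : σ) :
    pderiv i (X j ^ p : MvPolynomial σ R) = 0 := by
  rw [pderiv_pow, CharP.cast_eq_zero, zero_mul, zero_mul]

theorem mem_range_expand_of_forall_dvd {p : ℕ} {f : MvPolynomial σ R}
    (hf : ∀ m ∈ f.support, ∀ i, p ∣ m i) : f ∈ (expand (σ := σ) (R := R) p).range := by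
  rw [f.as_sum]
  refine sum_mem fun m hm => ⟨monomial (m.mapRange (· / p) (Nat.zero_div p)) (coeff m f), ?_⟩
  refine (expand_monomial p _ _).trans (congrArg (monomial · _) ?_)
  ext i
  simp [Nat.mul_div_cancel' (hf m hm i)]

end Polynomials

section PartialDerivatives

variable {R σ : Type*} [CommRing R]

theorem pderiv_comm (i j : σ) (f : MvPolynomial σ R) :
    pderiv i (pderiv j f) = pderiv j (pderiv i f) := by
  classical
  have h_lie : ⁅pderiv (R := R) i, pderiv (R := R) j⁆ = 0 := by
    refine derivation_ext fun k => ?_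
    simp only [Derivation.commutator_apply, pderiv_X, Pi.single_apply]
    split_ifs <;> simp
  rw [← sub_eq_zero, ← Derivation.commutator_apply, h_lie, Derivation.zero_apply]

theorem lie_lmul_add_pderiv_lmul (i : σ) (f g : MvPolynomial σ R) :
    ⁅Algebra.lmul R _ f + (pderiv i).toLinearMap, Algebra.lmul R _ g⁆ =
      Algebra.lmul R _ (pderiv i g) := by
  refine LinearMap.ext fun h => ?_
  simp only [Ring.lie_def, LinearMap.sub_apply, Module.End.mul_apply, LinearMap.add_apply,
    Algebra.coe_lmul_eq_mul, LinearMap.mul_apply', Derivation.coeFn_coe, pderiv_mul]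
  ring

theorem commute_lmul_add_pderiv {i j : σ} {f g : MvPolynomial σ R}
    (hfg : pderiv i g = pderiv j f) :
    Commute (Algebra.lmul R _ f + (pderiv i).toLinearMap)
      (Algebra.lmul R _ g + (pderiv j).toLinearMap) := by
  refine LinearMap.ext fun h => ?_
  simp only [Module.End.mul_apply, LinearMap.add_apply, Algebra.coe_lmul_eq_mul,
    LinearMap.mul_apply', Derivation.coeFn_coe, map_add, pderiv_mul, hfg, pderiv_comm i j h]
  ring

theorem dvd_of_pderiv_eq_zero {p : ℕ} (hp : p.Prime) [CharP R p] {i : σ} {f : MvPolynomial σ R}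
    (hf : pderiv i f = 0) {m : σ →₀ ℕ} (hm : m ∈ f.support) : p ∣ m i := by
  by_contra h_dvd
  have h_one_le : Finsupp.single i 1 ≤ m := by
    rw [Finsupp.single_le_iff, Nat.one_le_iff_ne_zero]
    intro h_zero
    exact h_dvd (h_zero ▸ dvd_zero p)
  obtain ⟨m', rfl⟩ : ∃ m', m = m' + Finsupp.single i 1 :=
    ⟨_, (tsub_add_cancel_of_le h_one_le).symm⟩
  have h_unit : IsUnit ((m' i + 1 : ℕ) : R) :=
    (CharP.isUnit_natCast_iff hp).mpr (by simpa using h_dvd)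
  have h_coeff : coeff (m' + Finsupp.single i 1) f * ((m' i + 1 : ℕ) : R) = 0 := by
    rw [Nat.cast_add_one, ← coeff_pderiv, hf, coeff_zero]
  exact mem_support_iff.mp hm (h_unit.mul_left_eq_zero.mp h_coeff)

theorem mem_range_expand_of_pderiv_eq_zero {p : ℕ} (hp : p.Prime) [CharP R p]
    {f : MvPolynomial σ R} (hf : ∀ i, pderiv i f = 0) :
    f ∈ (expand (σ := σ) (R := R) p).range :=
  mem_range_expand_of_forall_dvd fun _ hm i => dvd_of_pderiv_eq_zero hp (hf i) hm

end PartialDerivatives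

namespace WeylAlgebra

variable {R : Type*} [CommRing R] {n : ℕ}

section Generators

theorem commute_wX_wX (i j : Fin n) : Commute (wX R i) (wX R j) := by
  simpa [wX, commute_iff_eq] using RingQuot.mkAlgHom_rel R (WeylRel.xx (R := R) i j)

theorem commute_wD_wD (i j : Fin n) : Commute (wD R i) (wD R j) := by
  simpa [wD, commute_iff_eq] using RingQuot.mkAlgHom_rel R (WeylRel.dd (R := R) i j)

theorem lie_wD_wX (i j : Fin n) :
    ⁅wD R i, wX R j⁆ = Pi.single (M := fun _ => WeylAlgebra R n) i 1 j := by
  have h_rel := RingQuot.mkAlgHom_rel R (WeylRel.dx (R := R) i j)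
  rw [map_add, map_mul, map_mul] at h_rel
  rw [Ring.lie_def, sub_eq_iff_eq_add', Pi.single_apply, wX, wD, h_rel]
  simp only [eq_comm (a := j)]
  split_ifs <;> simp

theorem lie_neg_wX_wD (i j : Fin n) :
    ⁅-wX R i, wD R j⁆ = Pi.single (M := fun _ => WeylAlgebra R n) i 1 j := by
  rw [neg_lie, lie_skew, lie_wD_wX, Pi.single_comm]

theorem adjoin_wX_union_wD_eq_top :
    Algebra.adjoin R (Set.range (wX R) ∪ Set.range (wD R)) =
      (⊤ : Subalgebra R (WeylAlgebra R n)) := by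
  have h_range : Set.range (wX R) ∪ Set.range (wD R) =
      RingQuot.mkAlgHom R (WeylRel R n) '' Set.range (FreeAlgebra.ι R) := by
    rw [← Set.range_comp, ← Set.Sum.elim_range]
    congr 1
    ext (i | i) <;> rfl
  rw [h_range, ← AlgHom.map_adjoin, FreeAlgebra.adjoin_range_ι, Algebra.map_top,
    AlgHom.range_eq_top]
  exact RingQuot.mkAlgHom_surjective R _

theorem mem_center_of_commute {a : WeylAlgebra R n} (hX : ∀ i, Commute (wX R i) a)
    (hD : ∀ i, Commute (wD R i) a) : a ∈ Subalgebra.center R (WeylAlgebra R n) := by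
  have h_le : Algebra.adjoin R (Set.range (wX R) ∪ Set.range (wD R)) ≤
      Subalgebra.centralizer R {a} := by
    refine Algebra.adjoin_le ?_
    rintro _ (⟨i, rfl⟩ | ⟨i, rfl⟩) _ rfl
    exacts [(hX i).symm, (hD i).symm]
  rw [adjoin_wX_union_wD_eq_top] at h_le
  exact Subalgebra.mem_center_iff.mpr fun b => (h_le (Algebra.mem_top (x := b)) a rfl).symm

variable {A : Type*} [Ring A] [Algebra R A] (x d : Fin n → A)
  (hx : ∀ i j, Commute (x i) (x j)) (hd : ∀ i j, Commute (d i) (d j))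
  (hdx : ∀ i j, ⁅d i, x j⁆ = Pi.single (M := fun _ => A) i 1 j)

/-- The universal property of the Weyl algebra: elements `x_i` and `d_i` of an `R`-algebra which
satisfy the Weyl relations are the images of the generators under an algebra homomorphism. -/
noncomputable def lift : WeylAlgebra R n →ₐ[R] A :=
  RingQuot.liftAlgHom R ⟨FreeAlgebra.lift R (Sum.elim x d), fun _ _ h => by
    cases h with
    | xx i j => simpa [commute_iff_eq] using hx i j
    | dd i j => simpa [commute_iff_eq] using hd i j
    | dx i j =>
      have h_lie := sub_eq_iff_eq_add'.mp ((Ring.lie_def _ _).symm.trans (hdx i j))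
      split_ifs with h_eq <;> simpa [Pi.single_apply, h_eq, eq_comm] using h_lie⟩

@[simp]
theorem lift_wX (i : Fin n) : lift (R := R) x d hx hd hdx (wX R i) = x i := by
  simp [lift, wX]

@[simp]
theorem lift_wD (i : Fin n) : lift (R := R) x d hx hd hdx (wD R i) = d i := by
  simp [lift, wD]

end Generators

section NormalOrdering

variable (R n) in
/-- The homomorphism from the polynomial ring in the `x_i` to the Weyl algebra. -/
noncomputable def evalX : MvPolynomial (Fin n) R →ₐ[R] WeylAlgebra R n :=
  aevalOfCommute (wX R) commute_wX_wX

variable (R n) in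
/-- The homomorphism from the polynomial ring in the `∂_i` to the Weyl algebra. -/
noncomputable def evalD : MvPolynomial (Fin n) R →ₐ[R] WeylAlgebra R n :=
  aevalOfCommute (wD R) commute_wD_wD

@[simp]
theorem evalX_X (i : Fin n) : evalX R n (X i) = wX R i :=
  aevalOfCommute_X _ _ i

@[simp]
theorem evalD_X (i : Fin n) : evalD R n (X i) = wD R i :=
  aevalOfCommute_X _ _ i

theorem lie_wD_evalX (i : Fin n) (f : MvPolynomial (Fin n) R) :
    ⁅wD R i, evalX R n f⁆ = evalX R n (pderiv i f) :=
  lie_aevalOfCommute_eq_aevalOfCommute_pderiv _ _ (lie_wD_wX i) f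

theorem lie_neg_wX_evalD (i : Fin n) (f : MvPolynomial (Fin n) R) :
    ⁅-wX R i, evalD R n f⁆ = evalD R n (pderiv i f) :=
  lie_aevalOfCommute_eq_aevalOfCommute_pderiv _ _ (lie_neg_wX_wD i) f

theorem commute_wX_evalX (i : Fin n) (f : MvPolynomial (Fin n) R) :
    Commute (wX R i) (evalX R n f) := by
  simpa using (Commute.all (X i) f).map (evalX R n)

theorem commute_wD_evalD (i : Fin n) (f : MvPolynomial (Fin n) R) :
    Commute (wD R i) (evalD R n f) := by
  simpa using (Commute.all (X i) f).map (evalD R n)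

variable (R n) in
/-- Normal ordering: the `R`-linear map from polynomials in `x` (the `Sum.inl` variables) and `ξ`
(the `Sum.inr` variables) to the Weyl algebra which sends `x^α ξ^β` to `x^α ∂^β`. -/
noncomputable def normalOrder : MvPolynomial (Fin n ⊕ Fin n) R →ₗ[R] WeylAlgebra R n :=
  LinearMap.mul' R (WeylAlgebra R n) ∘ₗ
    TensorProduct.map (evalX R n).toLinearMap (evalD R n).toLinearMap ∘ₗ
      (tensorEquivSum R (Fin n) (Fin n) R).symm.toLinearMap

theorem normalOrder_rename_mul_rename (f h : MvPolynomial (Fin n) R) :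
    normalOrder R n (rename Sum.inl f * rename Sum.inr h) = evalX R n f * evalD R n h := by
  simp [normalOrder, ← tensorEquivSum_tmul]

theorem normalOrder_one : normalOrder R n 1 = 1 := by
  simpa using normalOrder_rename_mul_rename (R := R) (n := n) 1 1

theorem normalOrder_X_inl_mul (i : Fin n) (f : MvPolynomial (Fin n ⊕ Fin n) R) :
    normalOrder R n (X (.inl i) * f) = wX R i * normalOrder R n f := by
  induction f using induction_on_rename_mul_rename with
  | add f₁ f₂ h₁ h₂ => simp only [mul_add, map_add, h₁, h₂]
  | mul f h =>
    rw [← mul_assoc, ← rename_X, ← map_mul, normalOrder_rename_mul_rename,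
      normalOrder_rename_mul_rename, map_mul, evalX_X, mul_assoc]

theorem normalOrder_X_inr_mul (i : Fin n) (f : MvPolynomial (Fin n ⊕ Fin n) R) :
    normalOrder R n (X (.inr i) * f) = normalOrder R n f * wD R i := by
  induction f using induction_on_rename_mul_rename with
  | add f₁ f₂ h₁ h₂ => simp only [mul_add, add_mul, map_add, h₁, h₂]
  | mul f h =>
    rw [mul_comm, mul_assoc, ← rename_X, ← map_mul, normalOrder_rename_mul_rename,
      normalOrder_rename_mul_rename, map_mul, evalD_X, mul_assoc]

theorem lie_wD_normalOrder (i : Fin n) (f : MvPolynomial (Fin n ⊕ Fin n) R) :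
    ⁅wD R i, normalOrder R n f⁆ = normalOrder R n (pderiv (.inl i) f) := by
  induction f using induction_on_rename_mul_rename with
  | add f₁ f₂ h₁ h₂ => simp only [lie_add, map_add, h₁, h₂]
  | mul f h =>
    have h_pderiv : pderiv (.inl i) (rename Sum.inl f * rename Sum.inr h) =
        rename Sum.inl (pderiv i f) * rename Sum.inr h := by
      rw [pderiv_mul, pderiv_rename Sum.inl_injective, pderiv_rename_of_notMem_range (by simp),
        mul_zero, add_zero]
    rw [h_pderiv, normalOrder_rename_mul_rename, normalOrder_rename_mul_rename,
      lie_mul_eq_lie_mul_add_mul_lie, lie_wD_evalX, (commute_wD_evalD i h).lie_eq, mul_zero,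
      add_zero]

theorem lie_neg_wX_normalOrder (i : Fin n) (f : MvPolynomial (Fin n ⊕ Fin n) R) :
    ⁅-wX R i, normalOrder R n f⁆ = normalOrder R n (pderiv (.inr i) f) := by
  induction f using induction_on_rename_mul_rename with
  | add f₁ f₂ h₁ h₂ => simp only [lie_add, map_add, h₁, h₂]
  | mul f h =>
    have h_pderiv : pderiv (.inr i) (rename Sum.inl f * rename Sum.inr h) =
        rename Sum.inl f * rename Sum.inr (pderiv i h) := by
      rw [pderiv_mul, pderiv_rename Sum.inr_injective, pderiv_rename_of_notMem_range (by simp),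
        zero_mul, zero_add]
    rw [h_pderiv, normalOrder_rename_mul_rename, normalOrder_rename_mul_rename,
      lie_mul_eq_lie_mul_add_mul_lie, lie_neg_wX_evalD, (commute_wX_evalX i f).neg_left.lie_eq,
      zero_mul, zero_add]

theorem wD_mul_normalOrder (i : Fin n) (f : MvPolynomial (Fin n ⊕ Fin n) R) :
    wD R i * normalOrder R n f = normalOrder R n (X (.inr i) * f + pderiv (.inl i) f) := by
  rw [map_add, normalOrder_X_inr_mul, ← lie_wD_normalOrder, Ring.lie_def, add_sub_cancel]

theorem mul_normalOrder_mem_range (a : WeylAlgebra R n) (f : MvPolynomial (Fin n ⊕ Fin n) R) :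
    a * normalOrder R n f ∈ LinearMap.range (normalOrder R n) := by
  have h_mem : a ∈ Algebra.adjoin R (Set.range (wX R) ∪ Set.range (wD R)) := by
    rw [adjoin_wX_union_wD_eq_top]
    exact Algebra.mem_top
  induction h_mem using Algebra.adjoin_induction generalizing f with
  | mem a ha =>
    obtain ⟨i, rfl⟩ | ⟨i, rfl⟩ := ha
    · exact ⟨_, normalOrder_X_inl_mul i f⟩
    · exact ⟨_, (wD_mul_normalOrder i f).symm⟩
  | algebraMap r => exact ⟨r • f, by rw [map_smul, Algebra.smul_def]⟩
  | add a b _ _ ha hb => simpa only [add_mul] using add_mem (ha f) (hb f)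
  | mul a b _ _ ha hb =>
    obtain ⟨f', hf'⟩ := hb f
    rw [mul_assoc, ← hf']
    exact ha f'

theorem normalOrder_surjective : Function.Surjective (normalOrder R n) := fun a => by
  simpa [normalOrder_one] using mul_normalOrder_mem_range a 1

end NormalOrdering

section PolynomialRepresentation

variable (R n) in
/-- The representation of the Weyl algebra on `R[x, ξ]` in which `x_i` acts as multiplication by
`x_i` and `∂_i` as `ξ_i + ∂/∂x_i`, modelling left multiplication on normally ordered operators. -/
noncomputable def polynomialRep :
    WeylAlgebra R n →ₐ[R] Module.End R (MvPolynomial (Fin n ⊕ Fin n) R) :=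
  lift (fun i => Algebra.lmul R _ (X (.inl i)))
    (fun i => Algebra.lmul R _ (X (.inr i)) + (pderiv (.inl i)).toLinearMap)
    (fun _ _ => (Commute.all _ _).map (Algebra.lmul R _))
    (fun i j => commute_lmul_add_pderiv (by simp))
    (fun i j => by
      rw [lie_lmul_add_pderiv_lmul, pderiv_X, Pi.single_apply, Pi.single_apply]
      simp only [Sum.inl.injEq]
      split_ifs
      · exact map_one _
      · exact map_zero _)

theorem polynomialRep_evalX (f : MvPolynomial (Fin n) R) :
    polynomialRep R n (evalX R n f) = Algebra.lmul R _ (rename Sum.inl f) := by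
  have h_hom : (polynomialRep R n).comp (evalX R n) =
      (Algebra.lmul R (MvPolynomial (Fin n ⊕ Fin n) R)).comp (rename Sum.inl) := by
    refine MvPolynomial.algHom_ext fun i => ?_
    simp [polynomialRep]
  exact DFunLike.congr_fun h_hom f

theorem polynomialRep_evalD_one (f : MvPolynomial (Fin n) R) :
    polynomialRep R n (evalD R n f) 1 = rename Sum.inr f := by
  induction f using MvPolynomial.induction_on with
  | C r =>
    rw [← algebraMap_eq, AlgHom.commutes, AlgHom.commutes, AlgHom.commutes,
      Module.algebraMap_end_apply, Algebra.algebraMap_eq_smul_one]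
  | add f₁ f₂ h₁ h₂ => simp only [map_add, LinearMap.add_apply, h₁, h₂]
  | mul_X f i hf =>
    rw [mul_comm, map_mul, map_mul, Module.End.mul_apply, hf, evalD_X]
    simp [polynomialRep, pderiv_rename_of_notMem_range]

theorem polynomialRep_normalOrder_one (f : MvPolynomial (Fin n ⊕ Fin n) R) :
    polynomialRep R n (normalOrder R n f) 1 = f := by
  induction f using induction_on_rename_mul_rename with
  | add f₁ f₂ h₁ h₂ => simp only [map_add, LinearMap.add_apply, h₁, h₂]
  | mul f h =>
    rw [normalOrder_rename_mul_rename, map_mul, Module.End.mul_apply, polynomialRep_evalD_one,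
      polynomialRep_evalX, Algebra.coe_lmul_eq_mul, LinearMap.mul_apply']

theorem normalOrder_injective : Function.Injective (normalOrder R n) :=
  Function.LeftInverse.injective (g := fun a => polynomialRep R n a 1)
    polynomialRep_normalOrder_one

end PolynomialRepresentation

section Center

theorem pderiv_eq_zero_of_normalOrder_mem_center {f : MvPolynomial (Fin n ⊕ Fin n) R}
    (hf : normalOrder R n f ∈ Subalgebra.center R (WeylAlgebra R n)) (k : Fin n ⊕ Fin n) :
    pderiv k f = 0 := by
  have h_lie (a : WeylAlgebra R n) : ⁅a, normalOrder R n f⁆ = 0 :=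
    commute_iff_lie_eq.mp (Subalgebra.mem_center_iff.mp hf a)
  apply normalOrder_injective
  rw [map_zero]
  obtain i | i := k
  · rw [← lie_wD_normalOrder, h_lie]
  · rw [← lie_neg_wX_normalOrder, h_lie]

theorem normalOrder_expand_mem_adjoin_pPowSet (p : ℕ) (f : MvPolynomial (Fin n ⊕ Fin n) R) :
    normalOrder R n (expand p f) ∈ Algebra.adjoin R (pPowSet R n p) := by
  induction f using induction_on_rename_mul_rename with
  | add f₁ f₂ h₁ h₂ => simpa only [map_add] using add_mem h₁ h₂
  | mul f h =>
    rw [map_mul, ← rename_expand, ← rename_expand, normalOrder_rename_mul_rename]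
    exact mul_mem
      (Algebra.adjoin_mono Set.subset_union_left (aevalOfCommute_expand_mem_adjoin _ _ p f))
      (Algebra.adjoin_mono Set.subset_union_right (aevalOfCommute_expand_mem_adjoin _ _ p h))

theorem wX_pow_char_mem_center (p : ℕ) [CharP R p] (i : Fin n) :
    wX R i ^ p ∈ Subalgebra.center R (WeylAlgebra R n) := by
  refine mem_center_of_commute (fun j => (commute_wX_wX j i).pow_right p) fun j => ?_
  rw [commute_iff_lie_eq, ← evalX_X, ← map_pow, lie_wD_evalX, pderiv_X_pow_char, map_zero]

theorem wD_pow_char_mem_center (p : ℕ) [CharP R p] (i : Fin n) :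
    wD R i ^ p ∈ Subalgebra.center R (WeylAlgebra R n) := by
  refine mem_center_of_commute (fun j => ?_) fun j => (commute_wD_wD j i).pow_right p
  rw [← Commute.neg_left_iff, commute_iff_lie_eq, ← evalD_X, ← map_pow, lie_neg_wX_evalD,
    pderiv_X_pow_char, map_zero]

end Center

end WeylAlgebra

/-- If `R` is a commutative ring of prime characteristic `p`, then the center
of the `n`-th Weyl algebra `A_n(R)` equals `C = R[x_1^p, …, x_n^p, ∂_1^p, …, ∂_n^p]`. -/
theorem weylAlgebra_center_eq_adjoin_pPows (R : Type*) [CommRing R] (n p : ℕ)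
    (hp : p.Prime) [CharP R p] :
    Subalgebra.center R (WeylAlgebra R n) = Algebra.adjoin R (pPowSet R n p) := by
  refine le_antisymm (fun a ha => ?_) (Algebra.adjoin_le ?_)
  · obtain ⟨f, rfl⟩ := WeylAlgebra.normalOrder_surjective a
    obtain ⟨g, rfl⟩ := mem_range_expand_of_pderiv_eq_zero hp
      (WeylAlgebra.pderiv_eq_zero_of_normalOrder_mem_center ha)
    exact WeylAlgebra.normalOrder_expand_mem_adjoin_pPowSet p g
  · rintro _ (⟨i, rfl⟩ | ⟨i, rfl⟩)
    · exact WeylAlgebra.wX_pow_char_mem_center p i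
    · exact WeylAlgebra.wD_pow_char_mem_center p i
end

section
/- Let R be a commutative ring of prime characteristic p, A = A_n(R) the n-th Weyl algebra over R, and C = R[x_1^p, …, x_n^p, ∂_1^p, …, ∂_n^p] its center. Then the natural map φ: A ⊗_C A^{op} → End_C(A) of C-algebras, given by φ(a ⊗ b)(x) = a x b, is an isomorphism; that is, A is an Azumaya algebra over C. -/
/-- The center of an algebra acts on the algebra by multiplication, making the
algebra an algebra over its center. -/
noncomputable instance centerAlgebra (R A : Type*) [CommRing R] [Ring A] [Algebra R A] :
    Algebra (Subalgebra.center R A) A :=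
  RingHom.toAlgebra' (Subalgebra.center R A).subtype
    (fun c x => (Subalgebra.mem_center_iff.mp c.2 x).symm)

/-!
Call `u ∈ A ⊗ Aᵒᵖ` a Casimir element if it is killed on the left by every
`ad a = a ⊗ 1 - 1 ⊗ a`. Such a `u` maps `A` into its center `C`, and `t * u = (φ(t)(1) ⊗ 1) * u`
for all `t`. If the two-sided ideal generated by the Casimir elements contains `1`, then
`1 = ∑ (a i ⊗ 1) * u i` with `u i` Casimir. Consequently `t = ∑ (φ(t)(a i) ⊗ 1) * u i` for every
`t`, so `φ` is injective, and `x = ∑ φ(u i)(x) * a i` is a dual basis expansion of `A` over `C`, so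
`A` is finitely generated projective and every endomorphism `g` is the image of
`∑ (g (a i) ⊗ 1) * u i`.

For the Weyl algebra with generators `v k`, the elements `ad (v k)` commute because the commutators
of the generators are scalars, and `ad (v k) ^ p = ad (v k ^ p) = 0` because `v k ^ p` is central.
Hence `∏ ad (v k) ^ (p - 1)` is a Casimir element. Taking the commutator with `z k ⊗ 1`, where
`[z k, v l] = δ_{kl}`, differentiates this product with respect to `ad (v k)`; since `(p - 1)!` is
invertible, repeated differentiation shows that the ideal contains `1`.
-/

section Commutator

variable {E ι : Type*} [Ring E]

theorem lie_pow_succ_of_commute {a b : E} (h : Commute ⁅a, b⁆ b) (m : ℕ) :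
    ⁅a, b ^ (m + 1)⁆ = ((m + 1 : ℕ) : E) * (⁅a, b⁆ * b ^ m) := by
  induction m with
  | zero => simp
  | succ m ih =>
    calc ⁅a, b ^ (m + 1 + 1)⁆ = ⁅a, b ^ (m + 1)⁆ * b + b ^ (m + 1) * ⁅a, b⁆ := by
          simp only [Ring.lie_def, pow_succ b (m + 1)]
          noncomm_ring
      _ = ((m + 1 + 1 : ℕ) : E) * (⁅a, b⁆ * b ^ (m + 1)) := by
          rw [ih, ← (h.pow_right (m + 1)).eq, mul_assoc, mul_assoc, ← pow_succ,
            Nat.cast_succ (m + 1), add_one_mul]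

theorem mem_of_pow_mul_mem_of_lie_eq_one {J : Ideal E} [J.IsTwoSided] {z v w : E} (hzv : ⁅z, v⁆ = 1)
    (hzw : Commute z w) {m : ℕ} (hm : IsUnit (m.factorial : E)) (hmem : v ^ m * w ∈ J) :
    w ∈ J := by
  induction m with
  | zero => simpa using hmem
  | succ m ih =>
    rw [Nat.factorial_succ, Nat.cast_mul, (Nat.cast_commute _ _).isUnit_mul_iff] at hm
    have hlie : ⁅z, v ^ (m + 1) * w⁆ = ((m + 1 : ℕ) : E) * (v ^ m * w) := by
      have hpow := lie_pow_succ_of_commute (hzv ▸ Commute.one_left v) m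
      rw [hzv, one_mul, Ring.lie_def] at hpow
      rw [Ring.lie_def, ← mul_assoc z, ← mul_assoc _ _ w, ← hpow, sub_mul, mul_assoc _ w z,
        ← hzw.eq]
      simp only [mul_assoc]
    have hlie_mem : ⁅z, v ^ (m + 1) * w⁆ ∈ J :=
      sub_mem (J.mul_mem_left _ hmem) (J.mul_mem_right _ hmem)
    exact ih hm.2 ((J.unit_mul_mem_iff_mem hm.1).mp (hlie ▸ hlie_mem))

variable {v : ι → E} {m : ℕ}

theorem one_mem_of_noncommProd_pow_mem [DecidableEq ι] {J : Ideal E} [J.IsTwoSided] {z : ι → E}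
    (hzv : ∀ k l, ⁅z k, v l⁆ = if k = l then 1 else 0) (hm : IsUnit (m.factorial : E))
    (s : Finset ι) (comm : (s : Set ι).Pairwise (Function.onFun Commute fun k ↦ v k ^ m))
    (hmem : s.noncommProd (fun k ↦ v k ^ m) comm ∈ J) : 1 ∈ J := by
  induction s using Finset.induction_on with
  | empty => simpa using hmem
  | insert k s hk ih =>
    rw [Finset.noncommProd_insert_of_notMem _ _ _ _ hk] at hmem
    refine ih _ (mem_of_pow_mul_mem_of_lie_eq_one (by simpa using hzv k k) ?_ hm hmem)
    refine Finset.noncommProd_commute _ _ _ _ fun l hl ↦ Commute.pow_right ?_ m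
    rw [commute_iff_lie_eq, hzv, if_neg (ne_of_mem_of_not_mem hl hk).symm]

theorem mul_noncommProd_pow_eq_zero {s : Finset ι} {k : ι} (hk : k ∈ s)
    (hv : v k ^ (m + 1) = 0)
    (comm : (s : Set ι).Pairwise (Function.onFun Commute fun k ↦ v k ^ m)) :
    v k * s.noncommProd (fun k ↦ v k ^ m) comm = 0 := by
  classical
  rw [← Finset.mul_noncommProd_erase s hk, ← mul_assoc, ← pow_succ', hv, zero_mul]

end Commutator

section EnvelopingAlgebra

open TensorProduct MulOpposite

variable (C : Type*) {A : Type*} [CommRing C] [Ring A] [Algebra C A]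

/-- The element `a ⊗ 1 - 1 ⊗ a` of the enveloping algebra `A ⊗[C] Aᵐᵒᵖ`, which acts on `A` as the
commutator `[a, ·]`. -/
def adTensor : A →ₗ[C] A ⊗[C] Aᵐᵒᵖ :=
  Algebra.TensorProduct.includeLeft.toLinearMap -
    Algebra.TensorProduct.includeRight.toLinearMap ∘ₗ (opLinearEquiv C).toLinearMap

theorem adTensor_apply (a : A) : adTensor C a = a ⊗ₜ[C] 1 - 1 ⊗ₜ[C] op a := rfl

theorem adTensor_algebraMap (c : C) : adTensor C (algebraMap C A c) = 0 := by
  rw [adTensor_apply, Algebra.algebraMap_eq_smul_one, op_smul, op_one, tmul_smul, smul_tmul',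
    sub_self]

theorem adTensor_mul (a b : A) :
    adTensor C (a * b) = a ⊗ₜ[C] 1 * adTensor C b + 1 ⊗ₜ[C] op b * adTensor C a := by
  simp [adTensor_apply, mul_sub]

theorem adTensor_lie (a b : A) : adTensor C ⁅a, b⁆ = ⁅adTensor C a, adTensor C b⁆ := by
  simp only [Ring.lie_def, adTensor_apply, sub_mul, mul_sub, sub_tmul, tmul_sub, op_sub, op_mul,
    Algebra.TensorProduct.tmul_mul_tmul, one_mul, mul_one]
  abel

theorem lie_tmul_one_adTensor (a b : A) : ⁅a ⊗ₜ[C] (1 : Aᵐᵒᵖ), adTensor C b⁆ = ⁅a, b⁆ ⊗ₜ[C] 1 := by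
  simp [Ring.lie_def, adTensor_apply, sub_mul, mul_sub, sub_tmul]

variable {C} in
theorem adTensor_pow_prime {p : ℕ} (hp : p.Prime) (hpC : (p : C) = 0) (a : A) :
    adTensor C (a ^ p) = adTensor C a ^ p := by
  have hcomm : Commute (adTensor C a) (1 ⊗ₜ[C] op a) := by
    simp [commute_iff_eq, adTensor_apply, sub_mul, mul_sub]
  have hpE : (p : A ⊗[C] Aᵐᵒᵖ) = 0 := by simpa using congrArg (algebraMap C (A ⊗[C] Aᵐᵒᵖ)) hpC
  have hpow := hcomm.add_pow_prime_eq hp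
  rw [adTensor_apply, sub_add_cancel, ← adTensor_apply, hpE, zero_mul, zero_mul, zero_mul,
    add_zero, Algebra.TensorProduct.tmul_pow, Algebra.TensorProduct.tmul_pow, one_pow, one_pow,
    ← op_pow] at hpow
  rw [adTensor_apply, hpow, add_sub_cancel_right]

variable (A)

/-- The elements of `A ⊗[C] Aᵐᵒᵖ` on which left multiplication by `a ⊗ 1` and by `1 ⊗ a` agree for
every `a : A`, i.e. the right annihilator of the kernel of the multiplication map
`A ⊗[C] Aᵐᵒᵖ → A`. -/
def casimirElements : Set (A ⊗[C] Aᵐᵒᵖ) :=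
  {u | ∀ a : A, adTensor C a * u = 0}

variable {C A}

theorem mem_casimirElements_of_adjoin_eq_top {s : Set A} (hs : Algebra.adjoin C s = ⊤)
    {u : A ⊗[C] Aᵐᵒᵖ} (hu : ∀ a ∈ s, adTensor C a * u = 0) : u ∈ casimirElements C A := by
  intro a
  have ha : a ∈ Algebra.adjoin C s := hs ▸ Algebra.mem_top
  induction ha using Algebra.adjoin_induction with
  | mem a ha => exact hu a ha
  | algebraMap c => rw [adTensor_algebraMap, zero_mul]
  | add a b _ _ ha hb => rw [map_add, add_mul, ha, hb, add_zero]
  | mul a b _ _ ha hb =>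
    rw [adTensor_mul, add_mul, mul_assoc, mul_assoc, ha, hb, mul_zero, mul_zero, add_zero]

instance isTwoSided_span_casimirElements : (Ideal.span (casimirElements C A)).IsTwoSided where
  mul_mem_of_left t ht := by
    induction ht using Submodule.span_induction with
    | mem u hu => exact Ideal.subset_span fun a ↦ by rw [← mul_assoc, hu a, zero_mul]
    | zero => simp
    | add x y _ _ hx hy => rw [add_mul]; exact add_mem hx hy
    | smul e x _ hx => rw [smul_eq_mul, mul_assoc]; exact Ideal.mul_mem_left _ _ hx

theorem mul_eq_mulLeftRight_one_tmul_mul {u : A ⊗[C] Aᵐᵒᵖ} (hu : u ∈ casimirElements C A)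
    (t : A ⊗[C] Aᵐᵒᵖ) : t * u = AlgHom.mulLeftRight C A t 1 ⊗ₜ[C] 1 * u := by
  induction t using TensorProduct.induction_on with
  | zero => simp
  | add s t hs ht => rw [add_mul, hs, ht, map_add, LinearMap.add_apply, add_tmul, add_mul]
  | tmul a b =>
    have hb : b.unop ⊗ₜ[C] 1 * u = 1 ⊗ₜ[C] b * u := by
      simpa [adTensor_apply, sub_mul, sub_eq_zero] using hu b.unop
    calc a ⊗ₜ[C] b * u = a ⊗ₜ[C] 1 * (1 ⊗ₜ[C] b * u) := by simp [← mul_assoc]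
      _ = AlgHom.mulLeftRight C A (a ⊗ₜ[C] b) 1 ⊗ₜ[C] 1 * u := by
        rw [← hb, ← mul_assoc]; simp

theorem exists_sum_tmul_one_mul_eq_one (h : 1 ∈ Ideal.span (casimirElements C A)) :
    ∃ (N : ℕ) (a : Fin N → A) (u : Fin N → casimirElements C A),
      ∑ i, a i ⊗ₜ[C] (1 : Aᵐᵒᵖ) * (u i : A ⊗[C] Aᵐᵒᵖ) = 1 := by
  obtain ⟨N, e, u, hsum⟩ := Submodule.mem_span_set'.mp h
  refine ⟨N, fun i ↦ AlgHom.mulLeftRight C A (e i) 1, u, ?_⟩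
  simpa only [← mul_eq_mulLeftRight_one_tmul_mul (u _).2, ← smul_eq_mul] using hsum

theorem mulLeftRight_mem_center_of_mem_casimirElements {u : A ⊗[C] Aᵐᵒᵖ}
    (hu : u ∈ casimirElements C A) (x : A) :
    AlgHom.mulLeftRight C A u x ∈ Subalgebra.center C A := by
  refine Subalgebra.mem_center_iff.mpr fun a ↦ ?_
  have hax := congrArg (AlgHom.mulLeftRight C A · x) (hu a)
  simpa [adTensor_apply, sub_eq_zero] using hax

theorem exists_linearMap_algebraMap_eq_mulLeftRight [Algebra.IsCentral C A] [FaithfulSMul C A]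
    (u : casimirElements C A) :
    ∃ f : A →ₗ[C] C, ∀ x, algebraMap C A (f x) = AlgHom.mulLeftRight C A u x := by
  let e := Algebra.botEquivOfInjective (FaithfulSMul.algebraMap_injective C A)
  refine ⟨e.toLinearMap ∘ₗ (AlgHom.mulLeftRight C A u).codRestrict (Subalgebra.toSubmodule ⊥)
    fun x ↦ Algebra.IsCentral.out (mulLeftRight_mem_center_of_mem_casimirElements u.2 x),
    fun x ↦ ?_⟩
  exact congrArg Subtype.val (e.symm_apply_apply _)

theorem injective_mulLeftRight_of_one_mem_span_casimirElements
    (h : 1 ∈ Ideal.span (casimirElements C A)) :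
    Function.Injective (AlgHom.mulLeftRight C A) := by
  obtain ⟨N, a, u, hsum⟩ := exists_sum_tmul_one_mul_eq_one h
  refine (injective_iff_map_eq_zero _).mpr fun t ht ↦ ?_
  rw [← mul_one t, ← hsum, Finset.mul_sum]
  refine Finset.sum_eq_zero fun i _ ↦ ?_
  rw [← mul_assoc, mul_eq_mulLeftRight_one_tmul_mul (u i).2, map_mul, ht]
  simp

theorem exists_dualBasis_of_one_mem_span_casimirElements [Algebra.IsCentral C A] [FaithfulSMul C A]
    (h : 1 ∈ Ideal.span (casimirElements C A)) :
    ∃ (N : ℕ) (a : Fin N → A) (u : Fin N → A ⊗[C] Aᵐᵒᵖ) (f : Fin N → A →ₗ[C] C),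
      (∀ i x, algebraMap C A (f i x) = AlgHom.mulLeftRight C A (u i) x) ∧
        ∀ x, ∑ i, f i x • a i = x := by
  obtain ⟨N, a, u, hsum⟩ := exists_sum_tmul_one_mul_eq_one h
  choose f hf using fun i ↦ exists_linearMap_algebraMap_eq_mulLeftRight (u i)
  refine ⟨N, a, fun i ↦ u i, f, hf, fun x ↦ ?_⟩
  calc ∑ i, f i x • a i = AlgHom.mulLeftRight C A (∑ i, a i ⊗ₜ[C] 1 * (u i).1) x := by
        simp [← hf, Algebra.commutes, Algebra.smul_def]
    _ = x := by simp [hsum]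

theorem isAzumaya_of_one_mem_span_casimirElements [Algebra.IsCentral C A] [FaithfulSMul C A]
    (h : 1 ∈ Ideal.span (casimirElements C A)) : IsAzumaya C A := by
  obtain ⟨N, a, u, f, hf, hdual⟩ := exists_dualBasis_of_one_mem_span_casimirElements h
  have hsplit : Fintype.linearCombination C a ∘ₗ LinearMap.pi f = LinearMap.id :=
    LinearMap.ext fun x ↦ by simpa [Fintype.linearCombination_apply] using hdual x
  have hprojective : Module.Projective C A := .of_split _ _ hsplit
  have hfinite : Module.Finite C A :=
    .of_surjective _ (LinearMap.surjective_of_comp_eq_id _ _ hsplit)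
  refine { bij := ⟨injective_mulLeftRight_of_one_mem_span_casimirElements h, fun g ↦ ?_⟩ }
  refine ⟨∑ i, g (a i) ⊗ₜ[C] 1 * u i, LinearMap.ext fun x ↦ ?_⟩
  calc AlgHom.mulLeftRight C A (∑ i, g (a i) ⊗ₜ[C] 1 * u i) x = ∑ i, f i x • g (a i) := by
        simp [← hf, Algebra.commutes, Algebra.smul_def]
    _ = g x := by rw [← congrArg g (hdual x), map_sum]; simp only [map_smul]

end EnvelopingAlgebra

section WeylGenerators

open TensorProduct MulOpposite

variable {C A ι : Type*} [CommRing C] [Ring A] [Algebra C A] {p : ℕ} {v : ι → A}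

theorem pow_prime_mem_center_of_lie_mem_bot (hp : p.Prime) (hpC : (p : C) = 0)
    (hgen : Algebra.adjoin C (Set.range v) = ⊤)
    (hvv : ∀ k l, ⁅v k, v l⁆ ∈ (⊥ : Subalgebra C A)) (k : ι) :
    v k ^ p ∈ Subalgebra.center C A := by
  have hpA : (p : A) = 0 := by simpa using congrArg (algebraMap C A) hpC
  have hcomm : ∀ l, Commute (v l) (v k ^ p) := fun l ↦ by
    obtain ⟨c, hc⟩ := Algebra.mem_bot.mp (hvv l k)
    have hpow := lie_pow_succ_of_commute (hc ▸ Algebra.commute_algebraMap_left c (v k)) (p - 1)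
    rwa [Nat.sub_add_cancel hp.one_le, hpA, zero_mul, ← commute_iff_lie_eq] at hpow
  have hle : Algebra.adjoin C (Set.range v) ≤ Subalgebra.centralizer C {v k ^ p} := by
    refine Algebra.adjoin_le ?_
    rintro _ ⟨l, rfl⟩
    exact Set.mem_centralizer_iff.mpr fun _ h ↦ h ▸ (hcomm l).symm.eq
  refine Subalgebra.mem_center_iff.mpr fun a ↦ ?_
  have ha := hle (hgen ▸ Algebra.mem_top : a ∈ _)
  exact (Subalgebra.mem_centralizer_iff C |>.mp ha _ rfl).symm

theorem isAzumaya_of_dual_generators [Finite ι] [DecidableEq ι] [Algebra.IsCentral C A]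
    [FaithfulSMul C A] (hp : p.Prime) (hpC : (p : C) = 0)
    (hgen : Algebra.adjoin C (Set.range v) = ⊤)
    (hvv : ∀ k l, ⁅v k, v l⁆ ∈ (⊥ : Subalgebra C A)) {z : ι → A}
    (hzv : ∀ k l, ⁅z k, v l⁆ = if k = l then 1 else 0) : IsAzumaya C A := by
  have := Fintype.ofFinite ι
  have := Fact.mk hp
  have had_comm (k l : ι) : Commute (adTensor C (v k)) (adTensor C (v l)) := by
    obtain ⟨c, hc⟩ := Algebra.mem_bot.mp (hvv k l)
    rw [commute_iff_lie_eq, ← adTensor_lie, ← hc, adTensor_algebraMap]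
  have had_pow (k : ι) : adTensor C (v k) ^ (p - 1 + 1) = 0 := by
    obtain ⟨c, hc⟩ := Algebra.mem_bot.mp <|
      Algebra.IsCentral.out (pow_prime_mem_center_of_lie_mem_bot hp hpC hgen hvv k)
    rw [Nat.sub_add_cancel hp.one_le, ← adTensor_pow_prime hp hpC, ← hc, adTensor_algebraMap]
  have had_dual (k l : ι) :
      ⁅z k ⊗ₜ[C] (1 : Aᵐᵒᵖ), adTensor C (v l)⁆ = if k = l then 1 else 0 := by
    rw [lie_tmul_one_adTensor, hzv]
    split_ifs <;> simp [Algebra.TensorProduct.one_def]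
  have hfactorial : IsUnit ((p - 1).factorial : A ⊗[C] Aᵐᵒᵖ) := by
    simpa using (IsUnit.natCast_factorial_of_isNilpotent (hpC ▸ IsNilpotent.zero)
      (Nat.sub_one_lt hp.ne_zero)).map (algebraMap C (A ⊗[C] Aᵐᵒᵖ))
  refine isAzumaya_of_one_mem_span_casimirElements <|
    one_mem_of_noncommProd_pow_mem had_dual hfactorial Finset.univ
      (fun k _ l _ _ ↦ (had_comm k l).pow_pow _ _) (Ideal.subset_span ?_)
  refine mem_casimirElements_of_adjoin_eq_top hgen ?_
  rintro _ ⟨k, rfl⟩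
  exact mul_noncommProd_pow_eq_zero (v := fun k ↦ adTensor C (v k)) (Finset.mem_univ k)
    (had_pow k) _

end WeylGenerators

section Center

variable (R : Type*) {A : Type*} [CommRing R] [Ring A] [Algebra R A]

instance isCentral_center : Algebra.IsCentral (Subalgebra.center R A) A where
  out a ha := Algebra.mem_bot.mpr
    ⟨⟨a, Subalgebra.mem_center_iff.mpr (Subalgebra.mem_center_iff.mp ha)⟩, rfl⟩

-- `Algebra.toSMul` selects the action of `centerAlgebra`; instance search would otherwise find the
-- action of a subalgebra by left multiplication.
instance faithfulSMul_center : @FaithfulSMul (Subalgebra.center R A) A Algebra.toSMul :=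
  (faithfulSMul_iff_algebraMap_injective _ _).mpr Subtype.val_injective

theorem adjoin_center_eq_top {s : Set A} (hs : Algebra.adjoin R s = ⊤) :
    Algebra.adjoin (Subalgebra.center R A) s = ⊤ := by
  refine eq_top_iff.mpr fun a _ ↦ ?_
  have ha : a ∈ Algebra.adjoin R s := hs ▸ Algebra.mem_top
  induction ha using Algebra.adjoin_induction with
  | mem a ha => exact Algebra.subset_adjoin ha
  | algebraMap r => exact Subalgebra.algebraMap_mem _ (algebraMap R (Subalgebra.center R A) r)
  | add a b _ _ ha hb => exact add_mem (ha trivial) (hb trivial)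
  | mul a b _ _ ha hb => exact mul_mem (ha trivial) (hb trivial)

end Center

namespace WeylAlgebra

attribute [local instance] LieRing.ofAssociativeRing

variable (R : Type*) [CommRing R] {n : ℕ}

theorem lie_wX_wX (i j : Fin n) : ⁅wX R i, wX R j⁆ = 0 := by
  have h := RingQuot.mkAlgHom_rel R (WeylRel.xx (R := R) i j)
  rw [map_mul, map_mul] at h
  exact sub_eq_zero.mpr h

theorem lie_wD_wD (i j : Fin n) : ⁅wD R i, wD R j⁆ = 0 := by
  have h := RingQuot.mkAlgHom_rel R (WeylRel.dd (R := R) i j)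
  rw [map_mul, map_mul] at h
  exact sub_eq_zero.mpr h

theorem lie_wD_wX_s5 (i j : Fin n) : ⁅wD R i, wX R j⁆ = if i = j then 1 else 0 := by
  have h := RingQuot.mkAlgHom_rel R (WeylRel.dx (R := R) i j)
  rw [map_add, map_mul, map_mul, apply_ite (RingQuot.mkAlgHom R (WeylRel R n)), map_one, map_zero]
    at h
  exact sub_eq_iff_eq_add'.mpr h

theorem lie_wX_wD (i j : Fin n) : ⁅wX R i, wD R j⁆ = if i = j then -1 else 0 := by
  rw [← lie_skew, lie_wD_wX_s5, apply_ite Neg.neg, neg_zero]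
  simp only [eq_comm]

variable (n) in
/-- The generators `x_1, …, x_n, ∂_1, …, ∂_n` as a single family. -/
noncomputable def generator : Fin n ⊕ Fin n → WeylAlgebra R n :=
  Sum.elim (wX R) (wD R)

variable (n) in
/-- The family `∂_1, …, ∂_n, -x_1, …, -x_n`, dual to `WeylAlgebra.generator` under the commutator
pairing `⁅dualGenerator k, generator l⁆ = δ_{kl}`. -/
noncomputable def dualGenerator : Fin n ⊕ Fin n → WeylAlgebra R n :=
  Sum.elim (wD R) fun i ↦ -wX R i

theorem adjoin_range_generator : Algebra.adjoin R (Set.range (generator R n)) = ⊤ := by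
  have hgen : generator R n = RingQuot.mkAlgHom R (WeylRel R n) ∘ FreeAlgebra.ι R := by
    ext (i | i) <;> rfl
  rw [hgen, Set.range_comp, ← AlgHom.map_adjoin, FreeAlgebra.adjoin_range_ι, Algebra.map_top,
    AlgHom.range_eq_top]
  exact RingQuot.mkAlgHom_surjective R _

theorem lie_generator_mem_bot {S : Type*} [CommRing S] [Algebra S (WeylAlgebra R n)]
    (k l : Fin n ⊕ Fin n) :
    ⁅generator R n k, generator R n l⁆ ∈ (⊥ : Subalgebra S (WeylAlgebra R n)) := by
  rcases k with i | i <;> rcases l with j | j <;>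
    simp only [generator, Sum.elim_inl, Sum.elim_inr, lie_wX_wX, lie_wD_wD, lie_wD_wX_s5, lie_wX_wD,
      zero_mem] <;>
    split_ifs <;> simp only [zero_mem, one_mem, neg_mem]

theorem lie_dualGenerator_generator (k l : Fin n ⊕ Fin n) :
    ⁅dualGenerator R n k, generator R n l⁆ = if k = l then 1 else 0 := by
  rcases k with i | i <;> rcases l with j | j <;>
    simp [dualGenerator, generator, lie_wX_wX, lie_wD_wD, lie_wD_wX_s5, lie_wX_wD,
      apply_ite (Neg.neg : WeylAlgebra R n → WeylAlgebra R n)]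

end WeylAlgebra

theorem weylAlgebra_isAzumaya_over_center_general (R : Type*) [CommRing R] (n p : ℕ)
    (hp : p.Prime) [CharP R p] :
    IsAzumaya (Subalgebra.center R (WeylAlgebra R n)) (WeylAlgebra R n) := by
  have hpC : (p : Subalgebra.center R (WeylAlgebra R n)) = 0 := by
    rw [← map_natCast (algebraMap R _), CharP.cast_eq_zero, map_zero]
  exact isAzumaya_of_dual_generators hp hpC
    (adjoin_center_eq_top R (WeylAlgebra.adjoin_range_generator R))
    (WeylAlgebra.lie_generator_mem_bot R) (WeylAlgebra.lie_dualGenerator_generator R)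

open TensorProduct MulOpposite in
set_option synthInstance.maxHeartbeats 1000000 in
set_option maxHeartbeats 1000000 in
/-- Let `R` be a commutative ring of prime characteristic `p`, `A = A_n(R)`
the `n`-th Weyl algebra and `C = R[x_1^p, …, x_n^p, ∂_1^p, …, ∂_n^p]` its center.  Then the
natural map of `C`-algebras `A ⊗_C A^op → End_C(A)`, `a ⊗ b ↦ (x ↦ a x b)`, is an
isomorphism; that is, `A` is an Azumaya algebra over `C`. -/
theorem weylAlgebra_isAzumaya_over_center (R : Type*) [CommRing R] (n p : ℕ)
    (hp : p.Prime) [CharP R p]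
    (hC : Subalgebra.center R (WeylAlgebra R n) = Algebra.adjoin R (pPowSet R n p)) :
    ∃ g : (@TensorProduct (Subalgebra.center R (WeylAlgebra R n)) _
          (WeylAlgebra R n) (WeylAlgebra R n)ᵐᵒᵖ _ _ Algebra.toModule Algebra.toModule)
        →ₐ[Subalgebra.center R (WeylAlgebra R n)]
          Module.End (Subalgebra.center R (WeylAlgebra R n)) (WeylAlgebra R n),
      (∀ a b x : WeylAlgebra R n, g (a ⊗ₜ op b) x = a * x * b) ∧ Function.Bijective g := by
  exact ⟨AlgHom.mulLeftRight _ _, fun a b x ↦ AlgHom.mulLeftRight_apply _ _ a (op b) x,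
    (weylAlgebra_isAzumaya_over_center_general R n p hp).bij⟩
end

section
/- Let R be a commutative ring of prime characteristic p, A = A_n(R) the n-th Weyl algebra over R, and C = R[x_1^p, …, x_n^p, ∂_1^p, …, ∂_n^p] its center. For every R-algebra homomorphism φ: A → A one has φ(C) ⊆ C. -/
/-!
Call `s` dual to a family `t` if `⁅sᵢ, tⱼ⁆ = δᵢⱼ`. Bracketing with `sᵢ` differentiates with respect
to `tᵢ`. Hence over a field of characteristic `p` the ordered monomials in `t` with exponents below
`p` are linearly independent, and a combination of them which commutes with every `sᵢ` is a scalar.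

The dual of the generators `(x, ∂)` is `(∂, -x)`, their `p`-th powers are central, and the `p²ⁿ`
ordered monomials in them span the Weyl algebra `A` over `C = R[xᵢᵖ, ∂ᵢᵖ]`, so `C` is the whole
center. The image of the generators under a homomorphism is again a family with a dual, so its `p²ⁿ`
ordered monomials are linearly independent over each residue field of `C` and, by a dimension count
and Nakayama, also span `A` over `C`. Whatever commutes with the images of the generators is
therefore central.
-/

section Commutator

variable {E : Type*} [Ring E]

theorem lie_mul_eq_lie_mul_add_mul_lie_s6 (v a b : E) : ⁅v, a * b⁆ = ⁅v, a⁆ * b + a * ⁅v, b⁆ := by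
  simp only [Ring.lie_def]
  noncomm_ring

theorem ring_neg_lie (a b : E) : ⁅-a, b⁆ = -⁅a, b⁆ := by
  rw [Ring.lie_def, Ring.lie_def, neg_mul, mul_neg, neg_sub_neg, neg_sub]

theorem lie_pow_eq_nsmul_of_commute {u v : E} (h : Commute ⁅v, u⁆ u) (k : ℕ) :
    ⁅v, u ^ k⁆ = k • (⁅v, u⁆ * u ^ (k - 1)) := by
  induction k with
  | zero => simp [Ring.lie_def]
  | succ k ih =>
    have lower : k • (⁅v, u⁆ * u ^ (k - 1)) * u = k • (⁅v, u⁆ * u ^ k) := by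
      cases k with
      | zero => simp
      | succ k => rw [smul_mul_assoc, mul_assoc, Nat.add_sub_cancel, ← pow_succ]
    rw [pow_succ, lie_mul_eq_lie_mul_add_mul_lie_s6, ih, lower, ← (h.pow_right k).eq, succ_nsmul,
      Nat.add_sub_cancel]

theorem commute_pow_of_natCast_eq_zero {p : ℕ} (hpE : (p : E) = 0) {u v : E}
    (h : Commute ⁅v, u⁆ u) : Commute v (u ^ p) := by
  rw [commute_iff_lie_eq, lie_pow_eq_nsmul_of_commute h, nsmul_eq_mul, hpE, zero_mul]

theorem eq_zero_of_nsmul_eq_zero_of_lt_prime {p k : ℕ} (hp : p.Prime) (hpE : (p : E) = 0)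
    (hk : k ≠ 0) (hkp : k < p) {y : E} (hy : k • y = 0) : y = 0 := by
  have hpy : p • y = 0 := by rw [nsmul_eq_mul, hpE, zero_mul]
  have hgcd := gcd_nsmul_eq_zero.2 ⟨hpy, hy⟩
  rwa [Nat.coprime_of_lt_prime hk hkp hp, one_nsmul] at hgcd

theorem lie_sum_pow_mul {u v : E} (h : ⁅v, u⁆ = 1) {N : ℕ} (g : Fin (N + 1) → E)
    (hg : ∀ k, Commute v (g k)) :
    ⁅v, ∑ k : Fin (N + 1), u ^ (k : ℕ) * g k⁆ =
      ∑ k : Fin N, u ^ (k : ℕ) * ((k + 1 : ℕ) • g k.succ) := by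
  have lie_term (k : Fin (N + 1)) :
      ⁅v, u ^ (k : ℕ) * g k⁆ = (k : ℕ) • (u ^ ((k : ℕ) - 1) * g k) := by
    rw [lie_mul_eq_lie_mul_add_mul_lie_s6, (hg k).lie_eq, mul_zero, add_zero,
      lie_pow_eq_nsmul_of_commute (h ▸ Commute.one_left u), h, one_mul, smul_mul_assoc]
  rw [Ring.lie_def, Finset.mul_sum, Finset.sum_mul, ← Finset.sum_sub_distrib]
  simp_rw [← Ring.lie_def, lie_term]
  rw [Fin.sum_univ_succ]
  simp only [Fin.val_zero, zero_smul, zero_add, Fin.val_succ, Nat.add_sub_cancel, mul_smul_comm]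

-- Bracketing with `v` differentiates `∑ uᵏ gₖ` with respect to `u`, and the factors `1, …, p - 1`
-- which this produces are invertible.
theorem coeff_succ_eq_zero_of_commute_sum_pow_mul {p : ℕ} (hp : p.Prime) (hpE : (p : E) = 0)
    {u v : E} (h : ⁅v, u⁆ = 1) {N : ℕ} (hN : N < p) (g : Fin (N + 1) → E)
    (hg : ∀ k, Commute v (g k)) (hsum : Commute v (∑ k : Fin (N + 1), u ^ (k : ℕ) * g k))
    (k : Fin N) : g k.succ = 0 := by
  induction N with
  | zero => exact k.elim0
  | succ N ih =>
    let g' : Fin (N + 1) → E := fun k => (k + 1 : ℕ) • g k.succ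
    have sum_eq_zero : ∑ k : Fin (N + 1), u ^ (k : ℕ) * g' k = 0 := by
      rw [← lie_sum_pow_mul h g hg, hsum.lie_eq]
    have succ_eq_zero : ∀ k : Fin N, g' k.succ = 0 :=
      ih (by omega) g' (fun k => (hg k.succ).smul_right _) (sum_eq_zero ▸ Commute.zero_right v)
    have zero_eq_zero : g' 0 = 0 := by
      simpa [Fin.sum_univ_succ, succ_eq_zero] using sum_eq_zero
    have eq_zero : ∀ k, g' k = 0 := Fin.cases zero_eq_zero succ_eq_zero
    exact eq_zero_of_nsmul_eq_zero_of_lt_prime hp hpE k.val.succ_ne_zero (by omega) (eq_zero k)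

theorem sum_pow_mul_eq_coeff_zero_of_commute {p : ℕ} (hp : p.Prime) (hpE : (p : E) = 0)
    {u v : E} (h : ⁅v, u⁆ = 1) (g : Fin p → E) (hg : ∀ k, Commute v (g k))
    (hsum : Commute v (∑ k : Fin p, u ^ (k : ℕ) * g k)) :
    ∑ k : Fin p, u ^ (k : ℕ) * g k = g ⟨0, hp.pos⟩ := by
  obtain ⟨N, rfl⟩ := Nat.exists_eq_add_one_of_ne_zero hp.ne_zero
  simp [Fin.sum_univ_succ,
    coeff_succ_eq_zero_of_commute_sum_pow_mul hp hpE h N.lt_succ_self g hg hsum]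

theorem coeff_eq_zero_of_sum_pow_mul_eq_zero {p : ℕ} (hp : p.Prime) (hpE : (p : E) = 0) {u v : E}
    (h : ⁅v, u⁆ = 1) (g : Fin p → E) (hg : ∀ k, Commute v (g k))
    (hsum : ∑ k : Fin p, u ^ (k : ℕ) * g k = 0) (k : Fin p) : g k = 0 := by
  obtain ⟨N, rfl⟩ := Nat.exists_eq_add_one_of_ne_zero hp.ne_zero
  have hcomm : Commute v (∑ k : Fin (N + 1), u ^ (k : ℕ) * g k) := hsum ▸ Commute.zero_right v
  cases k using Fin.cases with
  | zero => exact (sum_pow_mul_eq_coeff_zero_of_commute hp hpE h g hg hcomm).symm.trans hsum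
  | succ k =>
    exact coeff_succ_eq_zero_of_commute_sum_pow_mul hp hpE h N.lt_succ_self g hg hcomm k

end Commutator

/-- The monomial `t₀ ^ a₀ ⋯ tₘ₋₁ ^ aₘ₋₁`, with the factors in the order of their indices, of a
family of not necessarily commuting elements. Exponents are restricted to `0, …, p - 1`. -/
def orderedMonomial {E : Type*} [Monoid E] {m p : ℕ} (t : Fin m → E) (a : Fin m → Fin p) : E :=
  (List.ofFn fun i => t i ^ (a i : ℕ)).prod

/-- The `K`-submodule spanned by the `pᵐ` ordered monomials with all exponents less than `p`. -/
abbrev orderedMonomialSpan (K : Type*) {E : Type*} [CommSemiring K] [Semiring E] [Algebra K E]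
    {m : ℕ} (p : ℕ) (t : Fin m → E) : Submodule K E :=
  Submodule.span K (Set.range (orderedMonomial t : (Fin m → Fin p) → E))

section OrderedMonomial

variable {K E : Type*} [CommSemiring K] [Semiring E] [Algebra K E] {m p : ℕ}

theorem orderedMonomial_cons {M : Type*} [Monoid M] (t : Fin (m + 1) → M) (k : Fin p)
    (a : Fin m → Fin p) :
    orderedMonomial t (Fin.cons k a : Fin (m + 1) → Fin p) =
      t 0 ^ (k : ℕ) * orderedMonomial (Fin.tail t) a := by
  simp [orderedMonomial, List.ofFn_succ, Fin.tail]

theorem orderedMonomial_zero {M : Type*} [Monoid M] (hp : 0 < p) (t : Fin m → M) :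
    orderedMonomial t (fun _ => (⟨0, hp⟩ : Fin p)) = 1 := by
  simp [orderedMonomial]

theorem map_orderedMonomial {M N F : Type*} [Monoid M] [Monoid N] [FunLike F M N]
    [MonoidHomClass F M N] (f : F) (t : Fin m → M) (a : Fin m → Fin p) :
    f (orderedMonomial t a) = orderedMonomial (f ∘ t) a := by
  simp [orderedMonomial, map_list_prod, List.map_ofFn, Function.comp_def]

theorem commute_orderedMonomial {M : Type*} [Monoid M] {z : M} {t : Fin m → M}
    (h : ∀ i, Commute z (t i)) (a : Fin m → Fin p) : Commute z (orderedMonomial t a) := by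
  refine Commute.list_prod_right _ _ fun y hy => ?_
  obtain ⟨i, rfl⟩ := List.mem_ofFn.1 hy
  exact (h i).pow_right _

theorem commute_sum_smul_orderedMonomial {z : E} {t : Fin m → E} (h : ∀ i, Commute z (t i))
    (c : (Fin m → Fin p) → K) : Commute z (∑ a, c a • orderedMonomial t a) :=
  Commute.sum_right _ _ _ fun a _ => (commute_orderedMonomial h a).smul_right (c a)

theorem sum_smul_orderedMonomial_succ (t : Fin (m + 1) → E) (c : (Fin (m + 1) → Fin p) → K) :
    ∑ a, c a • orderedMonomial t a = ∑ k : Fin p, t 0 ^ (k : ℕ) *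
      ∑ a : Fin m → Fin p, c (Fin.cons k a) • orderedMonomial (Fin.tail t) a := by
  rw [← (Fin.consEquiv fun _ => Fin p).sum_comp, Fintype.sum_prod_type]
  simp only [Finset.mul_sum, mul_smul_comm, ← orderedMonomial_cons]
  rfl

end OrderedMonomial

/-- Each `sᵢ` acts by commutators on the family `t` as the partial derivative `∂/∂tᵢ`. The
generators `(x, ∂)` of a Weyl algebra are the family `t` dual to `s = (∂, -x)`. -/
def IsCommutatorDual {ι E : Type*} [DecidableEq ι] [Ring E] (s t : ι → E) : Prop :=
  ∀ i j, ⁅s i, t j⁆ = if i = j then 1 else 0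

namespace IsCommutatorDual

theorem map {ι E F : Type*} [DecidableEq ι] [Ring E] [Ring F] {s t : ι → E}
    (h : IsCommutatorDual s t) (f : E →+* F) : IsCommutatorDual (f ∘ s) (f ∘ t) := fun i j => by
  simp only [Function.comp_apply, Ring.lie_def, ← map_mul, ← map_sub]
  rw [← Ring.lie_def, h i j, apply_ite f, map_one, map_zero]

variable {K E : Type*} [CommRing K] [Ring E] [Algebra K E] {m p : ℕ}

theorem tail {s t : Fin (m + 1) → E} (h : IsCommutatorDual s t) :
    IsCommutatorDual (Fin.tail s) (Fin.tail t) := fun i j => by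
  simpa [Fin.tail] using h i.succ j.succ

theorem lie_zero_zero {s t : Fin (m + 1) → E} (h : IsCommutatorDual s t) : ⁅s 0, t 0⁆ = 1 := by
  simpa using h 0 0

theorem commute_zero_tail {s t : Fin (m + 1) → E} (h : IsCommutatorDual s t) (j : Fin m) :
    Commute (s 0) (Fin.tail t j) := by
  simpa [commute_iff_lie_eq, Fin.tail, (Fin.succ_ne_zero j).symm] using h 0 j.succ

theorem algebraMap_eq_zero_of_sum_eq_zero (hp : p.Prime) (hpE : (p : E) = 0) {s t : Fin m → E}
    (h : IsCommutatorDual s t) {c : (Fin m → Fin p) → K}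
    (hsum : ∑ a, c a • orderedMonomial t a = 0) (a : Fin m → Fin p) :
    algebraMap K E (c a) = 0 := by
  induction m with
  | zero =>
    rw [Subsingleton.elim a default]
    simpa [orderedMonomial, Algebra.smul_def] using hsum
  | succ m ih =>
    rw [sum_smul_orderedMonomial_succ] at hsum
    have coeff_eq_zero := coeff_eq_zero_of_sum_pow_mul_eq_zero hp hpE h.lie_zero_zero _
      (fun k => commute_sum_smul_orderedMonomial h.commute_zero_tail _) hsum
    rw [← Fin.cons_self_tail a]
    exact ih h.tail (coeff_eq_zero (a 0)) (Fin.tail a)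

theorem sum_mem_bot_of_commute (hp : p.Prime) (hpE : (p : E) = 0) {s t : Fin m → E}
    (h : IsCommutatorDual s t) {c : (Fin m → Fin p) → K}
    (hcomm : ∀ i, Commute (s i) (∑ a, c a • orderedMonomial t a)) :
    ∑ a, c a • orderedMonomial t a ∈ (⊥ : Subalgebra K E) := by
  induction m with
  | zero => simp [orderedMonomial, Subalgebra.smul_mem]
  | succ m ih =>
    have sum_eq : ∑ a, c a • orderedMonomial t a = ∑ a : Fin m → Fin p,
        c (Fin.cons ⟨0, hp.pos⟩ a) • orderedMonomial (Fin.tail t) a := by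
      rw [sum_smul_orderedMonomial_succ] at hcomm ⊢
      exact sum_pow_mul_eq_coeff_zero_of_commute hp hpE h.lie_zero_zero _
        (fun k => commute_sum_smul_orderedMonomial h.commute_zero_tail _) (hcomm 0)
    rw [sum_eq] at hcomm ⊢
    exact ih h.tail fun i => hcomm i.succ

theorem linearIndependent [FaithfulSMul K E] (hp : p.Prime) (hpE : (p : E) = 0) {s t : Fin m → E}
    (h : IsCommutatorDual s t) :
    LinearIndependent K (orderedMonomial t : (Fin m → Fin p) → E) :=
  Fintype.linearIndependent_iff.2 fun _ hsum a =>
    (FaithfulSMul.algebraMap_eq_zero_iff K E).1 (h.algebraMap_eq_zero_of_sum_eq_zero hp hpE hsum a)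

theorem isCentral (hp : p.Prime) (hpE : (p : E) = 0) {s t : Fin m → E} (h : IsCommutatorDual s t)
    (hspan : orderedMonomialSpan K p t = ⊤) : Algebra.IsCentral K E where
  out z hz := by
    have hz_span : z ∈ orderedMonomialSpan K p t := hspan ▸ Submodule.mem_top
    obtain ⟨c, rfl⟩ := (Submodule.mem_span_range_iff_exists_fun K).1 hz_span
    exact h.sum_mem_bot_of_commute hp hpE fun i => Subalgebra.mem_center_iff.1 hz (s i)

end IsCommutatorDual

section Spanning

variable {K E : Type*} [CommRing K] [Ring E] [Algebra K E] {m p : ℕ}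

theorem pow_mul_mem_orderedMonomialSpan (hp : 0 < p) {x : Fin (m + 1) → E}
    (hpow : x 0 ^ p ∈ (⊥ : Subalgebra K E)) {k : ℕ} (hk : k ≤ p) {w : E}
    (hw : w ∈ orderedMonomialSpan K p (Fin.tail x)) :
    x 0 ^ k * w ∈ orderedMonomialSpan K p x := by
  have mem_of_lt {k : ℕ} (hk : k < p) : x 0 ^ k * w ∈ orderedMonomialSpan K p x := by
    induction hw using Submodule.span_induction with
    | mem w hw =>
      obtain ⟨a, rfl⟩ := hw
      exact Submodule.subset_span ⟨Fin.cons ⟨k, hk⟩ a, orderedMonomial_cons x ⟨k, hk⟩ a⟩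
    | zero => simp
    | add y z _ _ hy hz => rw [mul_add]; exact add_mem hy hz
    | smul r y _ hy => rw [mul_smul_comm]; exact Submodule.smul_mem _ r hy
  rcases hk.lt_or_eq with hk | rfl
  · exact mem_of_lt hk
  · obtain ⟨r, hr⟩ := Algebra.mem_bot.1 hpow
    rw [← hr, ← Algebra.smul_def, ← one_mul w, ← pow_zero (x 0)]
    exact Submodule.smul_mem _ r (mem_of_lt hp)

theorem mul_orderedMonomial_mem_orderedMonomialSpan (hp : 0 < p) {x : Fin m → E}
    (hlie : ∀ i j, ⁅x i, x j⁆ ∈ (⊥ : Subalgebra K E))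
    (hpow : ∀ i, x i ^ p ∈ (⊥ : Subalgebra K E)) (i : Fin m) (a : Fin m → Fin p) :
    x i * orderedMonomial x a ∈ orderedMonomialSpan K p x := by
  induction m with
  | zero => exact i.elim0
  | succ m ih =>
    rw [← Fin.cons_self_tail a, orderedMonomial_cons, ← mul_assoc]
    set k : ℕ := (a 0 : ℕ)
    set w := orderedMonomial (Fin.tail x) (Fin.tail a)
    have hk : k < p := (a 0).isLt
    have hw : w ∈ orderedMonomialSpan K p (Fin.tail x) := Submodule.subset_span ⟨_, rfl⟩
    cases i using Fin.cases with
    | zero =>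
      rw [← pow_succ']
      exact pow_mul_mem_orderedMonomialSpan hp (hpow 0) hk hw
    | succ i =>
      have hxw := ih (x := Fin.tail x) (fun i j => hlie _ _) (fun i => hpow _) i (Fin.tail a)
      obtain ⟨r, hr⟩ := Algebra.mem_bot.1 (hlie i.succ 0)
      have move_past : x i.succ * x 0 ^ k * w =
          x 0 ^ k * (x i.succ * w) + k • r • (x 0 ^ (k - 1) * w) := by
        have hpow_lie := lie_pow_eq_nsmul_of_commute (hr ▸ Algebra.commutes r (x 0)) k
        rw [Ring.lie_def, sub_eq_iff_eq_add', ← hr, ← Algebra.smul_def] at hpow_lie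
        rw [hpow_lie, add_mul, mul_assoc, smul_mul_assoc, smul_mul_assoc]
      rw [move_past]
      exact add_mem (pow_mul_mem_orderedMonomialSpan hp (hpow 0) hk.le hxw) <|
        nsmul_mem (Submodule.smul_mem _ r <|
          pow_mul_mem_orderedMonomialSpan hp (hpow 0) (by omega) hw) k

theorem orderedMonomialSpan_eq_top (hp : 0 < p) {x : Fin m → E}
    (hlie : ∀ i j, ⁅x i, x j⁆ ∈ (⊥ : Subalgebra K E))
    (hpow : ∀ i, x i ^ p ∈ (⊥ : Subalgebra K E))
    (hgen : Algebra.adjoin K (Set.range x) = ⊤) :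
    orderedMonomialSpan K p x = ⊤ := by
  set M := orderedMonomialSpan K p x with hM
  have one_mem : (1 : E) ∈ M := Submodule.subset_span ⟨_, orderedMonomial_zero hp x⟩
  have mul_mem (y : E) : ∀ w ∈ M, y * w ∈ M := by
    have hy : y ∈ Algebra.adjoin K (Set.range x) := hgen ▸ Algebra.mem_top
    induction hy using Algebra.adjoin_induction with
    | mem y hy =>
      obtain ⟨i, rfl⟩ := hy
      have hle : M ≤ M.comap (LinearMap.mulLeft K (x i)) := by
        rw [hM, Submodule.span_le]
        rintro _ ⟨a, rfl⟩
        exact mul_orderedMonomial_mem_orderedMonomialSpan hp hlie hpow i a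
      exact fun w hw => hle hw
    | algebraMap r => exact fun w hw => Algebra.smul_def r w ▸ M.smul_mem r hw
    | add y z _ _ hy hz => exact fun w hw => add_mul y z w ▸ add_mem (hy w hw) (hz w hw)
    | mul y z _ _ hy hz => exact fun w hw => (mul_assoc y z w).symm ▸ hy _ (hz w hw)
  exact eq_top_iff.2 fun y _ => mul_one y ▸ mul_mem y 1 one_mem

end Spanning

open scoped TensorProduct in
theorem eq_top_of_forall_baseChange_residueField_eq_top {K M : Type*} [CommRing K]
    [AddCommGroup M] [Module K M] [Module.Finite K M] {N : Submodule K M}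
    (h : ∀ P : PrimeSpectrum K, N.baseChange P.asIdeal.ResidueField = ⊤) : N = ⊤ := by
  rw [← Submodule.Quotient.subsingleton_iff, ← Module.support_eq_empty_iff (R := K),
    Set.eq_empty_iff_forall_notMem]
  intro P hP
  rw [Module.mem_support_iff_nontrivial_residueField_tensorProduct] at hP
  have mkQ_eq_zero : N.mkQ.baseChange P.asIdeal.ResidueField = 0 := by
    refine LinearMap.ext_on ((N.baseChange_eq_span _).symm.trans (h P)) ?_
    rintro _ ⟨y, hy, rfl⟩
    simp [(Submodule.Quotient.mk_eq_zero N).2 hy]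
  have mkQ_surjective : Function.Surjective (N.mkQ.baseChange P.asIdeal.ResidueField) :=
    LinearMap.lTensor_surjective _ N.mkQ_surjective
  obtain ⟨y, hy⟩ := exists_ne (0 : P.asIdeal.ResidueField ⊗[K] (M ⧸ N))
  obtain ⟨z, rfl⟩ := mkQ_surjective y
  exact hy (by rw [mkQ_eq_zero, LinearMap.zero_apply])

namespace IsCommutatorDual

theorem span_eq_top_of_field {K E : Type*} [Field K] [Ring E] [Algebra K E] {m p : ℕ}
    (hp : p.Prime) (hpE : (p : E) = 0) {s t : Fin m → E} (h : IsCommutatorDual s t)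
    {w : (Fin m → Fin p) → E} (hw : Submodule.span K (Set.range w) = ⊤) :
    orderedMonomialSpan K p t = ⊤ := by
  cases subsingleton_or_nontrivial E
  · exact Subsingleton.elim _ _
  have : Module.Finite K E := .of_fg_top (hw ▸ Submodule.fg_span (Set.finite_range w))
  have hli := h.linearIndependent (K := K) hp hpE
  have finrank_le : Module.finrank K E ≤ Fintype.card (Fin m → Fin p) := by
    rw [← finrank_top, ← hw]
    exact finrank_range_le_card w
  exact hli.span_eq_top_of_card_eq_finrank' (hli.fintype_card_le_finrank.antisymm finrank_le)

variable {K E : Type*} [CommRing K] [Ring E] [Algebra K E] {m p : ℕ}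

open scoped TensorProduct in
theorem span_eq_top (hp : p.Prime) (hpE : (p : E) = 0) {s t : Fin m → E}
    (h : IsCommutatorDual s t) {w : (Fin m → Fin p) → E}
    (hw : Submodule.span K (Set.range w) = ⊤) :
    orderedMonomialSpan K p t = ⊤ := by
  have : Module.Finite K E := .of_fg_top (hw ▸ Submodule.fg_span (Set.finite_range w))
  refine eq_top_of_forall_baseChange_residueField_eq_top fun P => ?_
  let f : E →ₐ[K] P.asIdeal.ResidueField ⊗[K] E := Algebra.TensorProduct.includeRight
  have baseChange_span_range (w : (Fin m → Fin p) → E) :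
      (Submodule.span K (Set.range w)).baseChange P.asIdeal.ResidueField =
        Submodule.span P.asIdeal.ResidueField (Set.range (f ∘ w)) := by
    rw [Submodule.baseChange_span, Set.range_comp]
    rfl
  have hpf : (p : P.asIdeal.ResidueField ⊗[K] E) = 0 := by rw [← map_natCast f, hpE, map_zero]
  have hfw : Submodule.span P.asIdeal.ResidueField (Set.range (f ∘ w)) = ⊤ := by
    rw [← baseChange_span_range, hw, Submodule.baseChange_top]
  have comp_orderedMonomial : f ∘ (orderedMonomial t : (Fin m → Fin p) → E) =
      orderedMonomial (f ∘ t) := funext (map_orderedMonomial f t)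
  rw [baseChange_span_range, comp_orderedMonomial]
  exact (h.map f.toRingHom).span_eq_top_of_field hp hpf hfw

theorem commute_of_forall_commute (hp : p.Prime) (hpE : (p : E) = 0) {s t : Fin m → E}
    (h : IsCommutatorDual s t) {w : (Fin m → Fin p) → E}
    (hw : Submodule.span K (Set.range w) = ⊤) {z : E} (hz : ∀ i, Commute z (t i)) (y : E) :
    Commute y z := by
  have hy : y ∈ orderedMonomialSpan K p t := h.span_eq_top hp hpE hw ▸ Submodule.mem_top
  obtain ⟨c, rfl⟩ := (Submodule.mem_span_range_iff_exists_fun K).1 hy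
  exact (commute_sum_smul_orderedMonomial hz c).symm

end IsCommutatorDual

section CentralEval

variable {R E ι : Type*} [CommRing R] [Ring E] [Algebra R E]

/-- The action of the polynomial ring `R[Yᵢ]` on `E` in which `Yᵢ` acts as multiplication by the
central element `yᵢ`. It lets one treat `E` as an algebra over the subalgebra `R[yᵢ]`, which has
no commutative ring structure of its own. It is not an instance because it depends on `y`. -/
noncomputable abbrev centralEvalAlgebra {y : ι → E} (hy : ∀ i, y i ∈ Subalgebra.center R E) :
    Algebra (MvPolynomial ι R) E :=
  ((Subalgebra.center R E).val.comp
    (MvPolynomial.aeval fun i => ⟨y i, hy i⟩)).toRingHom.toAlgebra' fun f a =>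
      (Subalgebra.mem_center_iff.1 (MvPolynomial.aeval _ f : Subalgebra.center R E).2 a).symm

theorem isScalarTower_centralEvalAlgebra {y : ι → E} (hy : ∀ i, y i ∈ Subalgebra.center R E) :
    letI := centralEvalAlgebra hy
    IsScalarTower R (MvPolynomial ι R) E :=
  let := centralEvalAlgebra hy
  .of_algebraMap_eq fun r =>
    ((Subalgebra.center R E).val.comp (MvPolynomial.aeval fun i => ⟨y i, hy i⟩)).commutes r |>.symm

theorem mem_bot_centralEvalAlgebra_iff {y : ι → E} (hy : ∀ i, y i ∈ Subalgebra.center R E)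
    {z : E} :
    letI := centralEvalAlgebra hy
    z ∈ (⊥ : Subalgebra (MvPolynomial ι R) E) ↔ z ∈ Algebra.adjoin R (Set.range y) := by
  have range_eq : ((Subalgebra.center R E).val.comp
      (MvPolynomial.aeval fun i => ⟨y i, hy i⟩)).range = Algebra.adjoin R (Set.range y) := by
    rw [AlgHom.range_comp, ← Algebra.adjoin_range_eq_range_aeval, AlgHom.map_adjoin,
      ← Set.range_comp]
    rfl
  rw [← range_eq]
  exact Iff.rfl

end CentralEval

section CenterOfGenerated

variable {R E : Type*} [CommRing R] [Ring E] [Algebra R E] {p : ℕ}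

theorem pow_mem_center_of_lie_mem_bot {ι : Type*} (hpE : (p : E) = 0) {x : ι → E}
    (hlie : ∀ i j, ⁅x i, x j⁆ ∈ (⊥ : Subalgebra R E))
    (hgen : Algebra.adjoin R (Set.range x) = ⊤) (i : ι) :
    x i ^ p ∈ Subalgebra.center R E := by
  refine Subalgebra.mem_center_iff.2 fun y => ?_
  have hy : y ∈ Algebra.adjoin R (Set.range x) := hgen ▸ Algebra.mem_top
  refine (Algebra.commute_of_mem_adjoin_of_forall_mem_commute hy ?_).symm
  rintro _ ⟨j, rfl⟩
  obtain ⟨r, hr⟩ := Algebra.mem_bot.1 (hlie j i)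
  exact (commute_pow_of_natCast_eq_zero hpE (hr ▸ Algebra.commutes r _)).symm

variable {m : ℕ} {x : Fin m → E}

theorem orderedMonomialSpan_centralEvalAlgebra_eq_top (hp : 0 < p)
    (hlie : ∀ i j, ⁅x i, x j⁆ ∈ (⊥ : Subalgebra R E))
    (hgen : Algebra.adjoin R (Set.range x) = ⊤) (hx : ∀ i, x i ^ p ∈ Subalgebra.center R E) :
    letI := centralEvalAlgebra hx
    orderedMonomialSpan (MvPolynomial (Fin m) R) p x = ⊤ := by
  let := centralEvalAlgebra hx
  have := isScalarTower_centralEvalAlgebra hx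
  refine orderedMonomialSpan_eq_top hp (fun i j => ?_) (fun i => ?_) (eq_top_iff.2 fun y _ => ?_)
  · have bot_le : (⊥ : Subalgebra R E) ≤
        (⊥ : Subalgebra (MvPolynomial (Fin m) R) E).restrictScalars R := bot_le
    exact bot_le (hlie i j)
  · exact (mem_bot_centralEvalAlgebra_iff hx).2 (Algebra.subset_adjoin ⟨i, rfl⟩)
  · have adjoin_le : Algebra.adjoin R (Set.range x) ≤
        (Algebra.adjoin (MvPolynomial (Fin m) R) (Set.range x)).restrictScalars R :=
      Algebra.adjoin_le Algebra.subset_adjoin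
    exact adjoin_le (hgen ▸ Algebra.mem_top)

theorem IsCommutatorDual.center_eq_adjoin_pow (hp : p.Prime) (hpE : (p : E) = 0) {s : Fin m → E}
    (h : IsCommutatorDual s x) (hlie : ∀ i j, ⁅x i, x j⁆ ∈ (⊥ : Subalgebra R E))
    (hgen : Algebra.adjoin R (Set.range x) = ⊤) :
    Subalgebra.center R E = Algebra.adjoin R (Set.range fun i => x i ^ p) := by
  have hx := pow_mem_center_of_lie_mem_bot hpE hlie hgen
  refine le_antisymm (fun z hz => ?_) (Algebra.adjoin_le (Set.range_subset_iff.2 hx))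
  let := centralEvalAlgebra hx
  have hcentral : Algebra.IsCentral (MvPolynomial (Fin m) R) E :=
    h.isCentral hp hpE (orderedMonomialSpan_centralEvalAlgebra_eq_top hp.pos hlie hgen hx)
  exact (mem_bot_centralEvalAlgebra_iff hx).1
    (hcentral.out (Subalgebra.mem_center_iff.2 (Subalgebra.mem_center_iff.1 hz)))

theorem IsCommutatorDual.mem_center_of_forall_commute (hp : p.Prime) (hpE : (p : E) = 0)
    {s t : Fin m → E} (h : IsCommutatorDual s t)
    (hlie : ∀ i j, ⁅x i, x j⁆ ∈ (⊥ : Subalgebra R E))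
    (hgen : Algebra.adjoin R (Set.range x) = ⊤) {z : E} (hz : ∀ i, Commute z (t i)) :
    z ∈ Subalgebra.center R E := by
  have hx := pow_mem_center_of_lie_mem_bot hpE hlie hgen
  let := centralEvalAlgebra hx
  have hspan := orderedMonomialSpan_centralEvalAlgebra_eq_top hp.pos hlie hgen hx
  exact Subalgebra.mem_center_iff.2 (h.commute_of_forall_commute hp hpE hspan hz)

end CenterOfGenerated

section WeylAlgebra

variable (R : Type*) [CommRing R] (n : ℕ)

/-- The generators `x₁, …, xₙ, ∂₁, …, ∂ₙ` of the Weyl algebra as a single family, in this order. -/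
noncomputable def weylGen : Fin (n + n) → WeylAlgebra R n :=
  Fin.append (wX R) (wD R)

theorem lie_wX_wX (i j : Fin n) : ⁅wX R i, wX R j⁆ = 0 := by
  simpa [wX, Ring.lie_def, sub_eq_zero] using RingQuot.mkAlgHom_rel R (WeylRel.xx (R := R) i j)

theorem lie_wD_wD (i j : Fin n) : ⁅wD R i, wD R j⁆ = 0 := by
  simpa [wD, Ring.lie_def, sub_eq_zero] using RingQuot.mkAlgHom_rel R (WeylRel.dd (R := R) i j)

theorem lie_wD_wX (i j : Fin n) : ⁅wD R i, wX R j⁆ = if i = j then 1 else 0 := by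
  simpa [wX, wD, Ring.lie_def, sub_eq_iff_eq_add', apply_ite] using
    RingQuot.mkAlgHom_rel R (WeylRel.dx (R := R) i j)

theorem lie_wX_wD (i j : Fin n) : ⁅wX R i, wD R j⁆ = if i = j then -1 else 0 := by
  have hskew : ⁅wX R i, wD R j⁆ = -⁅wD R j, wX R i⁆ := by simp only [Ring.lie_def, neg_sub]
  rw [hskew, lie_wD_wX, apply_ite Neg.neg, neg_zero]
  simp only [eq_comm]

theorem isCommutatorDual_weylGen : IsCommutatorDual (Fin.append (wD R) (-wX R)) (weylGen R n) := by
  intro i j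
  induction i using Fin.addCases <;> induction j using Fin.addCases <;>
    simp only [weylGen, Fin.append_left, Fin.append_right, Pi.neg_apply, ring_neg_lie, lie_wX_wX,
      lie_wD_wD, lie_wD_wX, lie_wX_wD]
  · simp
  · rw [if_neg (Fin.ne_of_val_ne (by rw [Fin.val_castAdd, Fin.val_natAdd]; omega))]
  · rw [if_neg (Fin.ne_of_val_ne (by rw [Fin.val_castAdd, Fin.val_natAdd]; omega)), neg_zero]
  · split_ifs <;> simp_all

theorem lie_weylGen_mem_bot (i j : Fin (n + n)) :
    ⁅weylGen R n i, weylGen R n j⁆ ∈ (⊥ : Subalgebra R (WeylAlgebra R n)) := by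
  induction i using Fin.addCases <;> induction j using Fin.addCases <;>
    simp only [weylGen, Fin.append_left, Fin.append_right, lie_wX_wX, lie_wD_wD, lie_wD_wX,
      lie_wX_wD] <;>
    (try split_ifs) <;> simp [one_mem, zero_mem]

theorem weylGen_comp_finSumFinEquiv : weylGen R n ∘ finSumFinEquiv = Sum.elim (wX R) (wD R) :=
  Fin.append_comp_sumElim

theorem range_weylGen_pow (p : ℕ) : (Set.range fun i => weylGen R n i ^ p) = pPowSet R n p := by
  refine (Set.range_comp (· ^ p) (weylGen R n)).trans ?_
  rw [← finSumFinEquiv.surjective.range_comp, weylGen_comp_finSumFinEquiv, Set.Sum.elim_range,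
    Set.image_union, ← Set.range_comp, ← Set.range_comp]
  rfl

theorem adjoin_range_weylGen : Algebra.adjoin R (Set.range (weylGen R n)) = ⊤ := by
  have range_weylGen : Set.range (weylGen R n) =
      RingQuot.mkAlgHom R (WeylRel R n) '' Set.range (FreeAlgebra.ι R) := by
    rw [← Set.range_comp, ← finSumFinEquiv.surjective.range_comp, weylGen_comp_finSumFinEquiv]
    congr 1
    ext (i | i) <;> rfl
  rw [range_weylGen, ← AlgHom.map_adjoin, FreeAlgebra.adjoin_range_ι, Algebra.map_top,
    AlgHom.range_eq_top]
  exact RingQuot.mkAlgHom_surjective R (WeylRel R n)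

theorem weylAlgebra_natCast_eq_zero (p : ℕ) [CharP R p] : (p : WeylAlgebra R n) = 0 := by
  rw [← map_natCast (algebraMap R (WeylAlgebra R n)), CharP.cast_eq_zero, map_zero]

theorem center_weylAlgebra_eq_adjoin_pPowSet {p : ℕ} (hp : p.Prime) [CharP R p] :
    Subalgebra.center R (WeylAlgebra R n) = Algebra.adjoin R (pPowSet R n p) := by
  rw [← range_weylGen_pow]
  exact (isCommutatorDual_weylGen R n).center_eq_adjoin_pow hp (weylAlgebra_natCast_eq_zero R n p)
    (lie_weylGen_mem_bot R n) (adjoin_range_weylGen R n)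

end WeylAlgebra

theorem weylAlgebra_endomorphism_maps_center_into_center_general (R S : Type*) [CommRing R]
    [CommRing S] (n p : ℕ) (hp : p.Prime) [CharP R p] (φ : WeylAlgebra S n →+* WeylAlgebra R n) :
    ∀ a ∈ Subalgebra.center S (WeylAlgebra S n),
      φ a ∈ Subalgebra.center R (WeylAlgebra R n) := fun _ ha =>
  ((isCommutatorDual_weylGen S n).map φ).mem_center_of_forall_commute hp
    (weylAlgebra_natCast_eq_zero R n p) (lie_weylGen_mem_bot R n) (adjoin_range_weylGen R n)
    fun i => (Commute.map (Subalgebra.mem_center_iff.1 ha (weylGen S n i)) φ).symm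

/-- Let `R` be a commutative ring of prime characteristic `p`, `A = A_n(R)`
the `n`-th Weyl algebra and `C = R[x_1^p, …, x_n^p, ∂_1^p, …, ∂_n^p]` its center.  Every
`R`-algebra homomorphism `φ : A → A` satisfies `φ(C) ⊆ C`. -/
theorem weylAlgebra_endomorphism_maps_center_into_center (R : Type*) [CommRing R] (n p : ℕ)
    (hp : p.Prime) [CharP R p]
    (φ : WeylAlgebra R n →ₐ[R] WeylAlgebra R n) :
    ∀ a ∈ Algebra.adjoin R (pPowSet R n p), φ a ∈ Algebra.adjoin R (pPowSet R n p) := by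
  rw [← center_weylAlgebra_eq_adjoin_pPowSet R n hp]
  exact weylAlgebra_endomorphism_maps_center_into_center_general R R n p hp (φ : _ →+* _)
end

section
/- Let R be a commutative ring of prime characteristic p, A = A_n(R) the n-th Weyl algebra over R, and C = R[x_1^p, …, x_n^p, ∂_1^p, …, ∂_n^p] its center. An R-algebra homomorphism φ: A → A is an isomorphism if and only if its restriction φ|_C : C → C is an isomorphism. -/
/-!
Left multiplication by `x_i` and right multiplication by `∂_i`, together with the inner derivations
`[∂_i, ·]` and `-[x_i, ·]`, are commuting Heisenberg pairs of operators on `A` whose derivations are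
nilpotent of order `p`. Taylor expansion therefore makes `A` free of rank `p ^ (2 * n)` over the
common kernel of these derivations, the center. The elements whose Taylor coefficients lie in
`C = R[x_i ^ p, ∂_i ^ p]` form a submodule stable under all `x_i` and `∂_i`, hence all of `A`, so
the center is `C`.

The kernel of `φ` is stable under the derivations, so it vanishes as soon as it meets `C` trivially.
For surjectivity, `φ(C) ⊆ C` makes the images of the generators another such family, so `A` is also
free of rank `p ^ (2 * n)` over the centralizer `Z ⊇ C` of `φ(A)`; a surjective `C`-linear
endomorphism of a finite module being injective, comparing the two expansions gives `Z = C`.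
Thus `φ(A)` contains the coefficients `C` of the Taylor expansion in the images, hence all of `A`.
-/

section Characteristic

variable {A : Type*} [Ring A] {p : ℕ} {x y : A}

theorem sub_pow_prime_of_commute (hp : p.Prime) (hpA : (p : A) = 0) (h : Commute x y) :
    (x - y) ^ p = x ^ p - y ^ p := by
  obtain ⟨r, hr⟩ := (h.sub_left (Commute.refl y)).exists_add_pow_prime_eq hp
  simp only [sub_add_cancel, hpA, zero_mul, add_zero] at hr
  exact eq_sub_of_add_eq hr.symm

theorem mul_pow_succ_of_mul_eq_mul_add_one (h : x * y = y * x + 1) (m : ℕ) :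
    x * y ^ (m + 1) = y ^ (m + 1) * x + (m + 1) • y ^ m := by
  induction m with
  | zero => simpa using h
  | succ m ih =>
    calc x * y ^ (m + 2) = x * y ^ (m + 1) * y := by rw [pow_succ y (m + 1), mul_assoc]
      _ = y ^ (m + 1) * (x * y) + (m + 1) • y ^ (m + 1) := by
          rw [ih, add_mul, mul_assoc, smul_mul_assoc, ← pow_succ]
      _ = y ^ (m + 2) * x + (m + 2) • y ^ (m + 1) := by
          rw [h, mul_add, mul_one, ← mul_assoc, ← pow_succ, add_assoc, ← succ_nsmul']

theorem commute_pow_of_mul_eq_mul_add_one (hp : p ≠ 0) (hpA : (p : A) = 0)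
    (h : x * y = y * x + 1) : Commute x (y ^ p) := by
  obtain ⟨m, rfl⟩ := Nat.exists_eq_succ_of_ne_zero hp
  have := mul_pow_succ_of_mul_eq_mul_add_one h m
  rwa [nsmul_eq_mul, ← Nat.succ_eq_add_one, hpA, zero_mul, add_zero] at this

end Characteristic

section HeisenbergPair

variable {C M : Type*} [CommRing C] [AddCommGroup M] [Module C M] {p m : ℕ}
  {P d : Module.End C M} {N : Submodule C M}

theorem pow_mem_invtSubmodule {f : Module.End C M} (h : N ∈ f.invtSubmodule) (m : ℕ) :
    N ∈ (f ^ m).invtSubmodule := by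
  induction m with
  | zero => simp
  | succ m ih =>
    rw [pow_succ, Module.End.mul_eq_comp]
    exact Module.End.invtSubmodule.comp _ ih h

theorem ker_mem_invtSubmodule_of_commute {f g : Module.End C M} (h : Commute f g) :
    LinearMap.ker f ∈ g.invtSubmodule := fun a ha ↦ by
  rw [LinearMap.mem_ker] at ha
  rw [Submodule.mem_comap, LinearMap.mem_ker, ← Module.End.mul_apply, h.eq, Module.End.mul_apply,
    ha, map_zero]

theorem eq_bot_of_disjoint_ker_of_pow_eq_zero {f : Module.End C M}
    (hN : N ∈ f.invtSubmodule) (hf : f ^ m = 0) (hdisj : Disjoint N (LinearMap.ker f)) : N = ⊥ := by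
  suffices ∀ m, ∀ a ∈ N, (f ^ m) a = 0 → a = 0 from
    (Submodule.eq_bot_iff N).2 fun a ha ↦ this m a ha (by simp [hf])
  intro m
  induction m with
  | zero => exact fun a _ h ↦ h
  | succ m ih =>
    exact fun a ha h ↦ Submodule.disjoint_def.1 hdisj a ha (ih (f a) (hN ha) h)

theorem apply_pow_succ_apply (h : d * P = P * d + 1) {a : M} (ha : d a = 0) (m : ℕ) :
    d ((P ^ (m + 1)) a) = (m + 1) • (P ^ m) a := by
  simpa [ha, add_smul] using LinearMap.congr_fun (mul_pow_succ_of_mul_eq_mul_add_one h m) a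

theorem pow_apply_pow_apply_eq_factorial_nsmul (h : d * P = P * d + 1) {a : M} (ha : d a = 0)
    (m : ℕ) : (d ^ m) ((P ^ m) a) = m.factorial • a := by
  induction m with
  | zero => simp
  | succ m ih =>
    rw [pow_succ d, Module.End.mul_apply, apply_pow_succ_apply h ha, map_nsmul, ih, ← mul_smul,
      Nat.factorial_succ]

theorem pow_apply_pow_apply_eq_zero_of_lt (h : d * P = P * d + 1) {a : M} (ha : d a = 0)
    {j : ℕ} (hj : j < m) : (d ^ m) ((P ^ j) a) = 0 := by
  obtain ⟨t, rfl⟩ := Nat.exists_eq_add_of_lt hj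
  rw [show j + t + 1 = t + 1 + j by ring, pow_add, Module.End.mul_apply,
    pow_apply_pow_apply_eq_factorial_nsmul h ha, map_nsmul, pow_succ, Module.End.mul_apply, ha,
    map_zero, smul_zero]

/-- The map `(b₀, …, bₘ₋₁) ↦ ∑ⱼ Pʲ bⱼ` with coefficients in a submodule `N`. When `N` consists of
elements killed by a "derivative" `d` of `P`, this is Taylor expansion in the variable `P`. -/
def powSum (P : Module.End C M) (m : ℕ) (N : Submodule C M) : (Fin m → N) →ₗ[C] M :=
  ∑ j : Fin m, (P ^ (j : ℕ)) ∘ₗ N.subtype ∘ₗ LinearMap.proj j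

theorem powSum_apply (b : Fin m → N) : powSum P m N b = ∑ j : Fin m, (P ^ (j : ℕ)) (b j : M) := by
  simp [powSum]

theorem powSum_succ (b : Fin (m + 1) → N) :
    powSum P (m + 1) N b = powSum P m N (Fin.init b) + (P ^ m) (b (Fin.last m) : M) := by
  simp [powSum_apply, Fin.sum_univ_castSucc, Fin.init]

theorem powSum_single (j : Fin m) (b : N) : powSum P m N (Pi.single j b) = (P ^ (j : ℕ)) (b : M) :=
  (powSum_apply _).trans <| by
    rw [Finset.sum_eq_single j (fun i _ hi ↦ by simp [hi]) (by simp), Pi.single_eq_same]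

theorem range_powSum_le {N' : Submodule C M} (hN' : N' ∈ P.invtSubmodule) (hle : N ≤ N') :
    LinearMap.range (powSum P m N) ≤ N' := by
  rintro _ ⟨b, rfl⟩
  rw [powSum_apply]
  exact sum_mem fun j _ ↦ pow_mem_invtSubmodule hN' _ (hle (b j).2)

theorem range_powSum_mem_invtSubmodule_of_commute {f : Module.End C M} (hf : Commute f P)
    (hN : N ∈ f.invtSubmodule) :
    LinearMap.range (powSum P m N) ∈ f.invtSubmodule := by
  rintro _ ⟨b, rfl⟩
  refine ⟨fun j ↦ ⟨f (b j), hN (b j).2⟩, ?_⟩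
  simp only [powSum_apply, map_sum, ← Module.End.mul_apply, (hf.pow_right _).eq]

theorem range_powSum_mem_invtSubmodule (hN : N ∈ (P ^ p).invtSubmodule) :
    LinearMap.range (powSum P p N) ∈ P.invtSubmodule := by
  rintro _ ⟨b, rfl⟩
  rw [Submodule.mem_comap, powSum_apply, map_sum]
  refine sum_mem fun j _ ↦ ?_
  rw [← Module.End.mul_apply, ← pow_succ']
  rcases (show (j : ℕ) + 1 ≤ p from j.2).lt_or_eq with hj | hj
  · exact ⟨Pi.single ⟨j + 1, hj⟩ (b j), powSum_single _ _⟩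
  · refine ⟨Pi.single ⟨0, j.pos⟩ ⟨(P ^ p) (b j), hN (b j).2⟩, ?_⟩
    rw [powSum_single, hj, pow_zero, Module.End.one_apply]

theorem le_range_powSum (hp : 0 < p) : N ≤ LinearMap.range (powSum P p N) :=
  fun a ha ↦ ⟨Pi.single ⟨0, hp⟩ ⟨a, ha⟩, by simp [powSum_single]⟩

theorem range_powSum_mem_invtSubmodule_deriv (h : d * P = P * d + 1) (hN : N ≤ LinearMap.ker d) :
    LinearMap.range (powSum P m N) ∈ d.invtSubmodule := by
  rintro _ ⟨b, rfl⟩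
  rw [Submodule.mem_comap, powSum_apply, map_sum]
  refine sum_mem fun ⟨j, hj⟩ _ ↦ ?_
  have hb : d (b ⟨j, hj⟩) = 0 := hN (b ⟨j, hj⟩).2
  cases j with
  | zero => simp [hb]
  | succ j =>
    rw [apply_pow_succ_apply h hb]
    exact nsmul_mem (LinearMap.mem_range.2
      ⟨Pi.single ⟨j, Nat.lt_of_succ_lt hj⟩ (b ⟨j + 1, hj⟩), powSum_single _ _⟩) _

theorem pow_apply_powSum_succ (h : d * P = P * d + 1) (hN : N ≤ LinearMap.ker d)
    (b : Fin (m + 1) → N) :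
    (d ^ m) (powSum P (m + 1) N b) = m.factorial • (b (Fin.last m) : M) := by
  have hinit : (d ^ m) (powSum P m N (Fin.init b)) = 0 := by
    rw [powSum_apply, map_sum]
    exact Finset.sum_eq_zero fun j _ ↦
      pow_apply_pow_apply_eq_zero_of_lt h (hN (Fin.init b j).2) j.2
  rw [powSum_succ, map_add, hinit, zero_add,
    pow_apply_pow_apply_eq_factorial_nsmul h (hN (b (Fin.last m)).2)]

theorem isUnit_factorial_of_lt_prime (hp : p.Prime) (hpC : (p : C) = 0) (hm : m < p) :
    IsUnit (m.factorial : C) :=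
  have := Fact.mk hp
  IsUnit.natCast_factorial_of_isNilpotent (hpC ▸ IsNilpotent.zero) hm

theorem powSum_injective (hp : p.Prime) (hpC : (p : C) = 0) (h : d * P = P * d + 1)
    (hN : N ≤ LinearMap.ker d) (hm : m ≤ p) : Function.Injective (powSum P m N) := by
  rw [injective_iff_map_eq_zero]
  induction m with
  | zero => exact fun b _ ↦ Subsingleton.elim _ _
  | succ m ih =>
    intro b hb
    have hlast : b (Fin.last m) = 0 := by
      have hd := pow_apply_powSum_succ h hN b
      rw [hb, map_zero, ← Nat.cast_smul_eq_nsmul C, eq_comm,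
        (isUnit_factorial_of_lt_prime hp hpC hm).smul_eq_zero] at hd
      exact Subtype.ext hd
    have hinit : Fin.init b = 0 := by
      rw [powSum_succ, hlast, ZeroMemClass.coe_zero, map_zero, add_zero] at hb
      exact ih (Nat.le_of_succ_le hm) _ hb
    rw [← Fin.snoc_init_self b, hinit, hlast]
    ext j
    refine Fin.lastCases ?_ (fun j ↦ ?_) j <;> simp

theorem mem_range_powSum_of_pow_apply_eq_zero (hp : p.Prime) (hpC : (p : C) = 0)
    (h : d * P = P * d + 1) (hPN : N ∈ P.invtSubmodule) (hdN : N ∈ d.invtSubmodule) (hm : m ≤ p)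
    {a : M} (ha : a ∈ N) (hda : (d ^ m) a = 0) :
    a ∈ LinearMap.range (powSum P m (N ⊓ LinearMap.ker d)) := by
  induction m generalizing a with
  | zero => exact ⟨0, by simpa only [map_zero, pow_zero, Module.End.one_apply] using hda.symm⟩
  | succ m ih =>
    obtain ⟨u, hu⟩ := isUnit_factorial_of_lt_prime hp hpC hm
    -- the leading Taylor coefficient of `a`
    set b : M := (↑u⁻¹ : C) • (d ^ m) a with hb
    have hbN : b ∈ N := N.smul_mem _ (pow_mem_invtSubmodule hdN m ha)
    have hdb : d b = 0 := by
      rw [hb, map_smul, ← Module.End.mul_apply, ← pow_succ', hda, smul_zero]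
    have hrem : (d ^ m) (a - (P ^ m) b) = 0 := by
      rw [map_sub, pow_apply_pow_apply_eq_factorial_nsmul h hdb, ← Nat.cast_smul_eq_nsmul C, ← hu,
        hb, smul_smul, u.mul_inv, one_smul, sub_self]
    obtain ⟨c, hc⟩ := ih (Nat.le_of_succ_le hm)
      (N.sub_mem ha (pow_mem_invtSubmodule hPN m hbN)) hrem
    refine ⟨Fin.snoc (α := fun _ ↦ ↥(N ⊓ LinearMap.ker d)) c ⟨b, hbN, hdb⟩, ?_⟩
    rw [powSum_succ, Fin.init_snoc, Fin.snoc_last, hc, sub_add_cancel]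

theorem range_powSum_inf_ker (hp : p.Prime) (hpC : (p : C) = 0) (h : d * P = P * d + 1)
    (hd : d ^ p = 0) (hPN : N ∈ P.invtSubmodule) (hdN : N ∈ d.invtSubmodule) :
    LinearMap.range (powSum P p (N ⊓ LinearMap.ker d)) = N :=
  le_antisymm (range_powSum_le hPN inf_le_left) fun _ ha ↦
    mem_range_powSum_of_pow_apply_eq_zero hp hpC h hPN hdN le_rfl ha (by simp [hd])

theorem exists_linearEquiv_pi_inf_ker (hp : p.Prime) (hpC : (p : C) = 0) (h : d * P = P * d + 1)
    (hd : d ^ p = 0) (hPN : N ∈ P.invtSubmodule) (hdN : N ∈ d.invtSubmodule) :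
    ∃ (e : N ≃ₗ[C] (Fin p → ↥(N ⊓ LinearMap.ker d))) (j : Fin p),
      ∀ a, e (Submodule.inclusion inf_le_left a) j = a := by
  set F := powSum P p (N ⊓ LinearMap.ker d)
  have hF : Function.Injective F := powSum_injective hp hpC h inf_le_right le_rfl
  let e := (LinearEquiv.ofInjective F hF).trans
    (LinearEquiv.ofEq _ _ (range_powSum_inf_ker hp hpC h hd hPN hdN))
  let j : Fin p := ⟨0, hp.pos⟩
  refine ⟨e.symm, j, fun a ↦ ?_⟩
  have hsingle : e (Pi.single j a) = Submodule.inclusion inf_le_left a :=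
    Subtype.ext (powSum_single j a)
  rw [← hsingle, e.symm_apply_apply, Pi.single_eq_same]

theorem mem_of_mem_range_powSum (hp : p.Prime) (hpC : (p : C) = 0) (h : d * P = P * d + 1)
    (hN : N ≤ LinearMap.ker d) {a : M} (ha : a ∈ LinearMap.range (powSum P p N))
    (hda : d a = 0) : a ∈ N := by
  obtain ⟨b, rfl⟩ := ha
  set a := powSum P p N b
  let j : Fin p := ⟨0, hp.pos⟩
  have hb : Submodule.inclusion hN ∘ b = Pi.single j ⟨a, hda⟩ :=
    powSum_injective hp hpC h le_rfl le_rfl <|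
      calc powSum P p (LinearMap.ker d) (Submodule.inclusion hN ∘ b) = a := by
            simp only [a, powSum_apply, Function.comp_apply, Submodule.coe_inclusion]
        _ = powSum P p (LinearMap.ker d) (Pi.single j ⟨a, hda⟩) := by simp [powSum_single, j]
  have ha : (b j : M) = a := by simpa using congrArg Subtype.val (congrFun hb j)
  exact ha ▸ (b j).2

end HeisenbergPair

section HeisenbergFamily

variable {C M κ : Type*} [CommRing C] [AddCommGroup M] [Module C M] {p : ℕ}
  {P d d' : κ → Module.End C M}

/-- Operators `P k` and `d k` on a `C`-module obeying the relations of "multiplication by the `k`-th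
variable" and "`k`-th partial derivative", with `d k` nilpotent of order `p`. -/
structure IsHeisenbergFamily (p : ℕ) (P d : κ → Module.End C M) : Prop where
  commute_mul (k l : κ) : Commute (P k) (P l)
  commute_deriv (k l : κ) : Commute (d k) (d l)
  commute_deriv_mul {k l : κ} (hkl : k ≠ l) : Commute (d k) (P l)
  deriv_mul (k : κ) : d k * P k = P k * d k + 1
  deriv_pow (k : κ) : d k ^ p = 0

/-- The elements killed by every `d k` with `k ∈ S`: the "constants" in the variables of `S`. -/
def commonKer (d : κ → Module.End C M) (S : Finset κ) : Submodule C M :=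
  ⨅ k ∈ S, LinearMap.ker (d k)

theorem mem_commonKer {S : Finset κ} {a : M} : a ∈ commonKer d S ↔ ∀ k ∈ S, d k a = 0 := by
  simp [commonKer]

theorem commonKer_empty : commonKer d ∅ = ⊤ := by simp [commonKer]

theorem commonKer_insert [DecidableEq κ] (k : κ) (S : Finset κ) :
    commonKer d (insert k S) = commonKer d S ⊓ LinearMap.ker (d k) := by
  rw [commonKer, Finset.iInf_insert, inf_comm, commonKer]

theorem commonKer_mem_invtSubmodule {S : Finset κ} {f : Module.End C M}
    (hf : ∀ k ∈ S, Commute (d k) f) : commonKer d S ∈ f.invtSubmodule :=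
  fun _ ha ↦ mem_commonKer.2 fun k hk ↦
    ker_mem_invtSubmodule_of_commute (hf k hk) (mem_commonKer.1 ha k hk)

theorem eq_bot_of_disjoint_commonKer (hcomm : ∀ k l, Commute (d k) (d l))
    (hpow : ∀ k, d k ^ p = 0) {N : Submodule C M} (hN : ∀ k, N ∈ (d k).invtSubmodule)
    {S : Finset κ} (hdisj : Disjoint N (commonKer d S)) : N = ⊥ := by
  classical
  induction S using Finset.induction_on with
  | empty => rwa [commonKer_empty, disjoint_top] at hdisj
  | insert k S _ ih =>
    refine ih (disjoint_iff.2 (eq_bot_of_disjoint_ker_of_pow_eq_zero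
      ((d k).invtSubmodule.inf_mem (hN k) (commonKer_mem_invtSubmodule fun l _ ↦ hcomm l k))
      (hpow k) ?_))
    rwa [disjoint_iff, inf_assoc, ← commonKer_insert, ← disjoint_iff]

theorem le_of_linearEquiv_pi {σ : Type*} [Finite σ] {K K' : Submodule C M} [Module.Finite C K]
    (e : M ≃ₗ[C] (σ → K)) (e' : M ≃ₗ[C] (σ → K')) {i : σ} (hei : ∀ a : K, e a i = a)
    (hle : K ≤ K') : K' ≤ K := by
  have : Module.Finite C M := Module.Finite.equiv e.symm
  let retract : M →ₗ[C] K := LinearMap.proj i ∘ₗ e.toLinearMap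
  let retract' : K' →ₗ[C] K := retract ∘ₗ K'.subtype
  have hsurj : Function.Surjective retract' := fun a ↦ ⟨Submodule.inclusion hle a, hei a⟩
  have hinj : Function.Injective retract' := by
    let f : M →ₗ[C] M := e.symm.toLinearMap ∘ₗ retract'.compLeft σ ∘ₗ e'.toLinearMap
    have hf : Function.Injective f := OrzechProperty.injective_of_surjective_endomorphism f <|
      e.symm.surjective.comp (hsurj.comp_left.comp e'.surjective)
    intro a b hab
    have hconst : e'.symm (fun _ ↦ a) = e'.symm fun _ ↦ b := hf <| by
      simp only [f, LinearMap.comp_apply, LinearEquiv.coe_coe, e'.apply_symm_apply]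
      exact congrArg e.symm (funext fun _ ↦ hab)
    exact congrFun (e'.symm.injective hconst) i
  intro a ha
  have hra : retract' (Submodule.inclusion hle (retract a)) = retract' ⟨a, ha⟩ := hei (retract a)
  have haK : (retract a : M) = a := congrArg Subtype.val (hinj hra)
  exact haK ▸ (retract a).2

namespace IsHeisenbergFamily

theorem commonKer_mem_invtSubmodule_deriv (h : IsHeisenbergFamily p P d) (k : κ) (S : Finset κ) :
    commonKer d S ∈ (d k).invtSubmodule :=
  commonKer_mem_invtSubmodule fun l _ ↦ h.commute_deriv l k

theorem commonKer_mem_invtSubmodule_mul (h : IsHeisenbergFamily p P d) {k : κ} {S : Finset κ}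
    (hk : k ∉ S) : commonKer d S ∈ (P k).invtSubmodule :=
  commonKer_mem_invtSubmodule fun _ hl ↦ h.commute_deriv_mul (ne_of_mem_of_not_mem hl hk)

theorem eq_top_of_commonKer_le (h : IsHeisenbergFamily p P d) (hp : p.Prime) (hpC : (p : C) = 0)
    {N : Submodule C M} (hN : ∀ k, N ∈ (P k).invtSubmodule) {S : Finset κ}
    (hle : commonKer d S ≤ N) : N = ⊤ := by
  classical
  induction S using Finset.induction_on with
  | empty => rwa [commonKer_empty, top_le_iff] at hle
  | insert k S hk ih =>
    rw [commonKer_insert] at hle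
    rw [← range_powSum_inf_ker hp hpC (h.deriv_mul k) (h.deriv_pow k)
      (h.commonKer_mem_invtSubmodule_mul hk) (h.commonKer_mem_invtSubmodule_deriv k S)] at ih
    exact ih (range_powSum_le (hN k) hle)

theorem exists_linearEquiv_pi_commonKer (h : IsHeisenbergFamily p P d) (hp : p.Prime)
    (hpC : (p : C) = 0) (S : Finset κ) :
    ∃ (e : M ≃ₗ[C] (Fin (p ^ S.card) → commonKer d S)) (i : Fin (p ^ S.card)),
      ∀ a : commonKer d S, e a i = a := by
  classical
  induction S using Finset.induction_on with
  | empty =>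
    rw [Finset.card_empty, pow_zero]
    exact ⟨(LinearEquiv.ofTop _ commonKer_empty).symm ≪≫ₗ (LinearEquiv.funUnique (Fin 1) C _).symm,
      0, fun a ↦ rfl⟩
  | insert k S hk ih =>
    obtain ⟨e, i, hei⟩ := ih
    obtain ⟨ek, j, hekj⟩ := exists_linearEquiv_pi_inf_ker hp hpC (h.deriv_mul k) (h.deriv_pow k)
      (h.commonKer_mem_invtSubmodule_mul hk) (h.commonKer_mem_invtSubmodule_deriv k S)
    rw [commonKer_insert, Finset.card_insert_of_notMem hk, pow_succ]
    refine ⟨e ≪≫ₗ LinearEquiv.piCongrRight (fun _ ↦ ek) ≪≫ₗ (LinearEquiv.curry C _ _ _).symm ≪≫ₗ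
      LinearEquiv.funCongrLeft C _ finProdFinEquiv.symm, finProdFinEquiv (i, j), fun a ↦ ?_⟩
    have hea : e a i = Submodule.inclusion inf_le_left a := hei (Submodule.inclusion inf_le_left a)
    simp [LinearEquiv.funCongrLeft_apply, LinearMap.funLeft_apply, hea, hekj]

theorem commonKer_univ_le_of_le [Fintype κ] {P' : κ → Module.End C M}
    (h : IsHeisenbergFamily p P d) (h' : IsHeisenbergFamily p P' d') (hp : p.Prime)
    (hpC : (p : C) = 0) [Module.Finite C (commonKer d Finset.univ)]
    (hle : commonKer d Finset.univ ≤ commonKer d' Finset.univ) :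
    commonKer d' Finset.univ ≤ commonKer d Finset.univ := by
  obtain ⟨e, i, hei⟩ := h.exists_linearEquiv_pi_commonKer hp hpC Finset.univ
  obtain ⟨e', -⟩ := h'.exists_linearEquiv_pi_commonKer hp hpC Finset.univ
  exact le_of_linearEquiv_pi e e' hei hle

theorem exists_invtSubmodule_inf_commonKer_le [Fintype κ] (h : IsHeisenbergFamily p P d)
    (hp : p.Prime) (hpC : (p : C) = 0) {N : Submodule C M} (hN : N ≤ commonKer d Finset.univ)
    (hpow : ∀ k, N ∈ (P k ^ p).invtSubmodule) (S : Finset κ) :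
    ∃ N' : Submodule C M, N ≤ N' ∧ (∀ k ∈ S, N' ∈ (P k).invtSubmodule) ∧
      (∀ k, N' ∈ (P k ^ p).invtSubmodule) ∧ (∀ k, N' ∈ (d k).invtSubmodule) ∧
      (∀ k ∉ S, N' ≤ LinearMap.ker (d k)) ∧ N' ⊓ commonKer d Finset.univ ≤ N := by
  classical
  induction S using Finset.induction_on with
  | empty =>
    have hker k : N ≤ LinearMap.ker (d k) := fun a ha ↦
      mem_commonKer.1 (hN ha) k (Finset.mem_univ k)
    refine ⟨N, le_rfl, by simp, hpow, fun k a ha ↦ ?_, fun k _ ↦ hker k, inf_le_left⟩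
    rw [Submodule.mem_comap, hker k ha]
    exact N.zero_mem
  | insert k S hk ih =>
    obtain ⟨N', hNN', hP, hpow', hd, hker, hle⟩ := ih
    refine ⟨LinearMap.range (powSum (P k) p N'), hNN'.trans (le_range_powSum hp.pos),
      fun l hl ↦ ?_, fun l ↦ ?_, fun l ↦ ?_, fun l hl ↦ ?_, fun a ha ↦ hle ⟨?_, ha.2⟩⟩
    · rcases Finset.mem_insert.1 hl with rfl | hl
      · exact range_powSum_mem_invtSubmodule (hpow' l)
      · exact range_powSum_mem_invtSubmodule_of_commute (h.commute_mul l k) (hP l hl)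
    · exact range_powSum_mem_invtSubmodule_of_commute ((h.commute_mul l k).pow_left p) (hpow' l)
    · rcases eq_or_ne l k with rfl | hlk
      · exact range_powSum_mem_invtSubmodule_deriv (h.deriv_mul l) (hker l hk)
      · exact range_powSum_mem_invtSubmodule_of_commute (h.commute_deriv_mul hlk) (hd l)
    · rw [Finset.mem_insert, not_or] at hl
      exact range_powSum_le (ker_mem_invtSubmodule_of_commute (h.commute_deriv_mul hl.1))
        (hker l hl.2)
    · exact mem_of_mem_range_powSum hp hpC (h.deriv_mul k) (hker k hk) ha.1
        (mem_commonKer.1 ha.2 k (Finset.mem_univ k))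

theorem commonKer_univ_le_of_forall_eq_top [Fintype κ] (h : IsHeisenbergFamily p P d)
    (hp : p.Prime) (hpC : (p : C) = 0) {N : Submodule C M} (hN : N ≤ commonKer d Finset.univ)
    (hpow : ∀ k, N ∈ (P k ^ p).invtSubmodule)
    (htop : ∀ N' : Submodule C M, N ≤ N' → (∀ k, N' ∈ (P k).invtSubmodule) →
      (∀ k, N' ∈ (d k).invtSubmodule) → N' = ⊤) : commonKer d Finset.univ ≤ N := by
  obtain ⟨N', hNN', hP, -, hd, -, hle⟩ :=
    h.exists_invtSubmodule_inf_commonKer_le hp hpC hN hpow Finset.univ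
  rwa [htop N' hNN' (fun k ↦ hP k (Finset.mem_univ k)) hd, top_inf_eq] at hle

end IsHeisenbergFamily

end HeisenbergFamily

section CommutatorEnd

variable {T A : Type*} [CommRing T] [Ring A] [Algebra T A] {p : ℕ}

/-- The inner derivation `a ↦ y * a - a * y` of `A`, as a `T`-linear endomorphism. -/
def commutatorEnd (T : Type*) {A : Type*} [CommRing T] [Ring A] [Algebra T A] (y : A) :
    Module.End T A :=
  LinearMap.mulLeft T y - LinearMap.mulRight T y

theorem commutatorEnd_apply (y a : A) : commutatorEnd T y a = y * a - a * y := rfl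

theorem commutatorEnd_apply_eq_zero_iff {y a : A} : commutatorEnd T y a = 0 ↔ Commute y a :=
  sub_eq_zero

theorem commutatorEnd_eq_zero_of_mem_center {y : A} (hy : y ∈ Set.center A) :
    commutatorEnd T y = 0 :=
  LinearMap.ext fun a ↦ commutatorEnd_apply_eq_zero_iff.2 (hy.comm a)

theorem commutatorEnd_pow_prime (hp : p.Prime) (hpT : (p : T) = 0) (y : A) :
    commutatorEnd T y ^ p = commutatorEnd T (y ^ p) := by
  have hpEnd : (p : Module.End T A) = 0 := by
    rw [← map_natCast (algebraMap T (Module.End T A)), hpT, map_zero]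
  rw [commutatorEnd, sub_pow_prime_of_commute hp hpEnd (LinearMap.commute_mulLeft_right y y),
    LinearMap.pow_mulLeft, LinearMap.pow_mulRight, commutatorEnd]

theorem commutatorEnd_mul_sub_mul (y z : A) :
    commutatorEnd T y * commutatorEnd T z - commutatorEnd T z * commutatorEnd T y =
      commutatorEnd T (y * z - z * y) := by
  ext a
  simp only [LinearMap.sub_apply, Module.End.mul_apply, commutatorEnd_apply]
  noncomm_ring

theorem commute_commutatorEnd {y z : A} (h : y * z - z * y ∈ Set.center A) :
    Commute (commutatorEnd T y) (commutatorEnd T z) :=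
  sub_eq_zero.1 <|
    (commutatorEnd_mul_sub_mul y z).trans (commutatorEnd_eq_zero_of_mem_center h)

theorem commutatorEnd_mul_mulLeft (y x : A) :
    commutatorEnd T y * LinearMap.mulLeft T x =
      LinearMap.mulLeft T x * commutatorEnd T y + LinearMap.mulLeft T (y * x - x * y) := by
  ext a
  simp only [LinearMap.add_apply, Module.End.mul_apply, commutatorEnd_apply,
    LinearMap.mulLeft_apply]
  noncomm_ring

theorem commutatorEnd_mul_mulRight (y x : A) :
    commutatorEnd T y * LinearMap.mulRight T x =
      LinearMap.mulRight T x * commutatorEnd T y + LinearMap.mulRight T (y * x - x * y) := by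
  ext a
  simp only [LinearMap.add_apply, Module.End.mul_apply, commutatorEnd_apply,
    LinearMap.mulRight_apply]
  noncomm_ring

theorem commute_commutatorEnd_mulLeft {y x : A} (h : Commute y x) :
    Commute (commutatorEnd T y) (LinearMap.mulLeft T x) := by
  simpa [h.eq, commute_iff_eq] using commutatorEnd_mul_mulLeft (T := T) y x

theorem commute_commutatorEnd_mulRight {y x : A} (h : Commute y x) :
    Commute (commutatorEnd T y) (LinearMap.mulRight T x) := by
  simpa [h.eq, commute_iff_eq] using commutatorEnd_mul_mulRight (T := T) y x

theorem commute_mulRight {x y : A} (h : Commute x y) :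
    Commute (LinearMap.mulRight T x) (LinearMap.mulRight T y) :=
  LinearMap.ext fun a ↦ by simp [mul_assoc, h.eq]

end CommutatorEnd

section AdjoinEqTop

variable {T A : Type*} [CommRing T] [Ring A] [Algebra T A] {s : Set A}

theorem centralizer_subset_center_of_adjoin_eq_top (hs : Algebra.adjoin T s = ⊤) :
    Set.centralizer s ⊆ Set.center A := fun a ha ↦ by
  have htop := hs ▸ Algebra.adjoin_le_centralizer_centralizer T s
  exact Semigroup.mem_center_iff.2 fun b ↦ (htop (Algebra.mem_top (x := b)) a ha).symm

theorem eq_top_of_mulLeft_mem_invtSubmodule {N : Submodule T A} (hs : Algebra.adjoin T s = ⊤)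
    (hone : 1 ∈ N) (hN : ∀ x ∈ s, N ∈ Module.End.invtSubmodule (LinearMap.mulLeft T x)) :
    N = ⊤ := by
  suffices ∀ a ∈ Algebra.adjoin T s, ∀ b ∈ N, a * b ∈ N from
    eq_top_iff.2 fun a _ ↦ mul_one a ▸ this a (hs ▸ Algebra.mem_top) 1 hone
  intro a ha
  induction ha using Algebra.adjoin_induction with
  | mem x hx => exact fun b hb ↦ hN x hx hb
  | algebraMap r => exact fun b hb ↦ Algebra.smul_def r b ▸ N.smul_mem r hb
  | add x y _ _ ihx ihy => exact fun b hb ↦ add_mul x y b ▸ N.add_mem (ihx b hb) (ihy b hb)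
  | mul x y _ _ ihx ihy => exact fun b hb ↦ (mul_assoc x y b).symm ▸ ihx _ (ihy b hb)

end AdjoinEqTop

section WeylFamily

variable {T A B ι : Type*} [CommRing T] [Ring A] [Algebra T A] [Ring B] {p : ℕ} {X D : ι → A}

/-- Elements of a ring satisfying the Weyl relations `[Xᵢ, Xⱼ] = 0`, `[Dᵢ, Dⱼ] = 0` and
`[Dᵢ, Xⱼ] = δᵢⱼ`. -/
structure IsWeylFamily (X D : ι → A) : Prop where
  commute_X (i j : ι) : Commute (X i) (X j)
  commute_D (i j : ι) : Commute (D i) (D j)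
  commute_D_X {i j : ι} (hij : i ≠ j) : Commute (D i) (X j)
  D_mul_X (i : ι) : D i * X i = X i * D i + 1

/-- Left multiplications by the `X i` and right multiplications by the `D i`. Multiplying by `D i`
on the right makes all these operators commute. -/
def weylMul (T : Type*) [CommRing T] [Algebra T A] (X D : ι → A) : ι ⊕ ι → Module.End T A :=
  Sum.elim (fun i ↦ LinearMap.mulLeft T (X i)) fun i ↦ LinearMap.mulRight T (D i)

/-- The partial derivatives `[D i, ·]` and `[-X i, ·]` with respect to the operators of
`weylMul`. -/
def weylDeriv (T : Type*) [CommRing T] [Algebra T A] (X D : ι → A) : ι ⊕ ι → Module.End T A :=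
  Sum.elim (fun i ↦ commutatorEnd T (D i)) fun i ↦ commutatorEnd T (-X i)

theorem mem_commonKer_weylDeriv [Fintype ι] {a : A} :
    a ∈ commonKer (weylDeriv T X D) Finset.univ ↔
      a ∈ Set.centralizer (Set.range (Sum.elim X D)) := by
  simp only [mem_commonKer, Finset.mem_univ, true_imp_iff, Sum.forall, weylDeriv, Sum.elim_inl,
    Sum.elim_inr, commutatorEnd_apply_eq_zero_iff, Commute.neg_left_iff, Set.mem_centralizer_iff,
    Set.forall_mem_range, ← commute_iff_eq, and_comm]

namespace IsWeylFamily

theorem map (h : IsWeylFamily X D) (φ : A →+* B) : IsWeylFamily (φ ∘ X) (φ ∘ D) where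
  commute_X i j := (h.commute_X i j).map φ
  commute_D i j := (h.commute_D i j).map φ
  commute_D_X hij := (h.commute_D_X hij).map φ
  D_mul_X i := by simp [← map_mul, h.D_mul_X i]

theorem D_mul_X_sub_mem_center (h : IsWeylFamily X D) (i j : ι) :
    D i * X j - X j * D i ∈ Set.center A := by
  rcases eq_or_ne i j with rfl | hij
  · rw [h.D_mul_X, add_sub_cancel_left]
    exact Set.one_mem_center
  · rw [(h.commute_D_X hij).eq, sub_self]
    exact Set.zero_mem_center

theorem commute_weylMul (h : IsWeylFamily X D) (k l : ι ⊕ ι) :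
    Commute (weylMul T X D k) (weylMul T X D l) := by
  rcases k with i | i <;> rcases l with j | j
  · exact (h.commute_X i j).map (Algebra.lmul T A)
  · exact LinearMap.commute_mulLeft_right (X i) (D j)
  · exact (LinearMap.commute_mulLeft_right (X j) (D i)).symm
  · exact commute_mulRight (h.commute_D i j)

theorem commute_weylDeriv (h : IsWeylFamily X D) (k l : ι ⊕ ι) :
    Commute (weylDeriv T X D k) (weylDeriv T X D l) := by
  have hcomm {y z : A} (hyz : Commute y z) : Commute (commutatorEnd T y) (commutatorEnd T z) :=
    commute_commutatorEnd (by rw [hyz.eq, sub_self]; exact Set.zero_mem_center)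
  have hDX i j : Commute (commutatorEnd T (D i)) (commutatorEnd T (-X j)) := by
    refine commute_commutatorEnd ?_
    rw [mul_neg, neg_mul, ← neg_sub']
    exact Set.neg_mem_center (h.D_mul_X_sub_mem_center i j)
  rcases k with i | i <;> rcases l with j | j
  · exact hcomm (h.commute_D i j)
  · exact hDX i j
  · exact (hDX j i).symm
  · exact hcomm (h.commute_X i j).neg_left.neg_right

theorem commute_weylDeriv_weylMul (h : IsWeylFamily X D) {k l : ι ⊕ ι} (hkl : k ≠ l) :
    Commute (weylDeriv T X D k) (weylMul T X D l) := by
  rcases k with i | i <;> rcases l with j | j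
  · exact commute_commutatorEnd_mulLeft (h.commute_D_X fun hij ↦ hkl (congrArg _ hij))
  · exact commute_commutatorEnd_mulRight (h.commute_D i j)
  · exact commute_commutatorEnd_mulLeft (h.commute_X i j).neg_left
  · exact commute_commutatorEnd_mulRight
      (h.commute_D_X fun hji ↦ hkl (congrArg _ hji.symm)).symm.neg_left

theorem neg_X_mul_D (h : IsWeylFamily X D) (i : ι) : -X i * D i = D i * -X i + 1 := by
  rw [neg_mul, mul_neg, h.D_mul_X]
  abel

theorem weylDeriv_mul_weylMul (h : IsWeylFamily X D) (k : ι ⊕ ι) :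
    weylDeriv T X D k * weylMul T X D k = weylMul T X D k * weylDeriv T X D k + 1 := by
  rcases k with i | i
  · simp only [weylMul, weylDeriv, Sum.elim_inl, commutatorEnd_mul_mulLeft, h.D_mul_X,
      add_sub_cancel_left, LinearMap.mulLeft_one, Module.End.one_eq_id]
  · simp only [weylMul, weylDeriv, Sum.elim_inr, commutatorEnd_mul_mulRight, h.neg_X_mul_D,
      add_sub_cancel_left, LinearMap.mulRight_one, Module.End.one_eq_id]

theorem isHeisenbergFamily (h : IsWeylFamily X D) (hp : p.Prime) (hpT : (p : T) = 0)
    (hpow : ∀ k, Sum.elim X D k ^ p ∈ Set.center A) :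
    IsHeisenbergFamily p (weylMul T X D) (weylDeriv T X D) where
  commute_mul := h.commute_weylMul
  commute_deriv := h.commute_weylDeriv
  commute_deriv_mul := h.commute_weylDeriv_weylMul
  deriv_mul := h.weylDeriv_mul_weylMul
  deriv_pow := by
    have hzero {y : A} (hy : y ^ p ∈ Set.center A) : commutatorEnd T y ^ p = 0 :=
      (commutatorEnd_pow_prime hp hpT y).trans (commutatorEnd_eq_zero_of_mem_center hy)
    rintro (i | i)
    · exact hzero (hpow (.inr i))
    · refine hzero (neg_pow (X i) p ▸ Set.mul_mem_center ?_ (hpow (.inl i)))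
      exact (Subring.center A).pow_mem (neg_mem (one_mem _)) p

theorem pow_mem_centralizer (h : IsWeylFamily X D) (hp : p ≠ 0) (hpA : (p : A) = 0) (k : ι ⊕ ι) :
    Sum.elim X D k ^ p ∈ Set.centralizer (Set.range (Sum.elim X D)) := by
  rw [Set.mem_centralizer_iff, Set.forall_mem_range]
  intro l
  change Commute (Sum.elim X D l) (Sum.elim X D k ^ p)
  have hX i : Commute (D i) (X i ^ p) := commute_pow_of_mul_eq_mul_add_one hp hpA (h.D_mul_X i)
  have hD i : Commute (X i) (D i ^ p) :=
    Commute.neg_left_iff.1 (commute_pow_of_mul_eq_mul_add_one hp hpA (h.neg_X_mul_D i))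
  rcases l with i | i <;> rcases k with j | j
  · exact (h.commute_X i j).pow_right p
  · rcases eq_or_ne i j with rfl | hij
    · exact hD i
    · exact (h.commute_D_X hij.symm).symm.pow_right p
  · rcases eq_or_ne i j with rfl | hij
    · exact hX i
    · exact (h.commute_D_X hij).pow_right p
  · exact (h.commute_D i j).pow_right p

theorem injective_of_injOn_center [Finite ι] (h : IsWeylFamily X D) (hp : p.Prime)
    (hpA : (p : A) = 0) (hcent : Set.centralizer (Set.range (Sum.elim X D)) ⊆ Set.center A)
    {φ : A →+* B} (hφ : Set.InjOn φ (Set.center A)) : Function.Injective φ := by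
  cases nonempty_fintype ι
  have hfam := h.isHeisenbergFamily (T := Subring.center A) hp (Subtype.ext hpA)
    fun k ↦ hcent (h.pow_mem_centralizer hp.ne_zero hpA k)
  let N : Submodule (Subring.center A) A := (RingHom.ker φ).restrictScalars _
  have hN k : N ∈ (weylDeriv (Subring.center A) X D k).invtSubmodule := by
    intro a (ha : φ a = 0)
    change φ _ = 0
    rcases k with i | i <;> simp [weylDeriv, commutatorEnd_apply, ha]
  have hbot : N = ⊥ := by
    refine eq_bot_of_disjoint_commonKer hfam.commute_deriv hfam.deriv_pow hN (S := Finset.univ) <|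
      Submodule.disjoint_def.2 fun a (ha : φ a = 0) haK ↦ ?_
    exact hφ (hcent (mem_commonKer_weylDeriv.1 haK)) Set.zero_mem_center (ha.trans φ.map_zero.symm)
  refine (injective_iff_map_eq_zero φ).2 fun a ha ↦ ?_
  have haN : a ∈ N := ha
  rwa [hbot, Submodule.mem_bot] at haN

theorem centralizer_subset_center_of_pow_mem_center [Finite ι] {X' D' : ι → A}
    (h : IsWeylFamily X D) (h' : IsWeylFamily X' D') (hp : p.Prime) (hpA : (p : A) = 0)
    (hcent : Set.centralizer (Set.range (Sum.elim X D)) ⊆ Set.center A)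
    (hpow' : ∀ k, Sum.elim X' D' k ^ p ∈ Set.center A) :
    Set.centralizer (Set.range (Sum.elim X' D')) ⊆ Set.center A := by
  cases nonempty_fintype ι
  have hfam := h.isHeisenbergFamily (T := Subring.center A) hp (Subtype.ext hpA)
    fun k ↦ hcent (h.pow_mem_centralizer hp.ne_zero hpA k)
  have hfam' := h'.isHeisenbergFamily (T := Subring.center A) hp (Subtype.ext hpA) hpow'
  have hspan : Submodule.span (Subring.center A) {1} =
      commonKer (weylDeriv (Subring.center A) X D) Finset.univ := by
    refine le_antisymm ((Submodule.span_singleton_le_iff_mem _ _).2 ?_) fun a ha ↦ ?_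
    · exact mem_commonKer_weylDeriv.2 Set.one_mem_centralizer
    · exact Submodule.mem_span_singleton.2
        ⟨⟨a, hcent (mem_commonKer_weylDeriv.1 ha)⟩, mul_one a⟩
  have : Module.Finite (Subring.center A)
      (commonKer (weylDeriv (Subring.center A) X D) Finset.univ) :=
    Module.Finite.iff_fg.2 ⟨{1}, by simpa using hspan⟩
  have hle := hfam.commonKer_univ_le_of_le hfam' hp (Subtype.ext hpA) fun a ha ↦
    mem_commonKer_weylDeriv.2 <| Set.center_subset_centralizer _ <|
      hcent (mem_commonKer_weylDeriv.1 ha)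
  exact fun a ha ↦ hcent (mem_commonKer_weylDeriv.1 (hle (mem_commonKer_weylDeriv.2 ha)))

theorem surjective_of_surjOn_center [Finite ι] {X' D' : ι → B} (h : IsWeylFamily X D)
    (h' : IsWeylFamily X' D') (hp : p.Prime) (hpA : (p : A) = 0)
    (hcent : Set.centralizer (Set.range (Sum.elim X D)) ⊆ Set.center A)
    (hcent' : Set.centralizer (Set.range (Sum.elim X' D')) ⊆ Set.center B)
    {φ : A →+* B} (hmaps : Set.MapsTo φ (Set.center A) (Set.center B))
    (hφ : Set.SurjOn φ (Set.center A) (Set.center B)) : Function.Surjective φ := by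
  cases nonempty_fintype ι
  have hpB : (p : B) = 0 := by rw [← map_natCast φ, hpA, map_zero]
  have hpow k : Sum.elim (φ ∘ X) (φ ∘ D) k ^ p ∈ Set.center B := by
    rw [← Sum.comp_elim, Function.comp_apply, ← map_pow]
    exact hmaps (hcent (h.pow_mem_centralizer hp.ne_zero hpA k))
  have hfam := (h.map φ).isHeisenbergFamily (T := Subring.center B) hp (Subtype.ext hpB) hpow
  let N : Submodule (Subring.center B) B :=
    { φ.range with
      smul_mem' := fun c _ hb ↦ by
        obtain ⟨a, -, ha⟩ := hφ c.2
        exact φ.range.mul_mem ⟨a, ha⟩ hb }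
  have hN k : N ∈ (weylMul (Subring.center B) (φ ∘ X) (φ ∘ D) k).invtSubmodule := by
    rintro _ ⟨a, rfl⟩
    rcases k with i | i
    · exact ⟨X i * a, map_mul φ _ _⟩
    · exact ⟨a * D i, map_mul φ _ _⟩
  have htop : N = ⊤ := hfam.eq_top_of_commonKer_le hp (Subtype.ext hpB) hN (S := Finset.univ) <| by
    intro b hb
    obtain ⟨a, -, ha⟩ := hφ <| h'.centralizer_subset_center_of_pow_mem_center (h.map φ) hp hpB
      hcent' hpow (mem_commonKer_weylDeriv.1 hb)
    exact ⟨a, ha⟩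
  intro b
  have hb : b ∈ N := htop ▸ Submodule.mem_top
  exact hb

theorem bijective_iff_bijOn_center [Finite ι] {X' D' : ι → B} (h : IsWeylFamily X D)
    (h' : IsWeylFamily X' D') (hp : p.Prime) (hpA : (p : A) = 0)
    (hcent : Set.centralizer (Set.range (Sum.elim X D)) ⊆ Set.center A)
    (hcent' : Set.centralizer (Set.range (Sum.elim X' D')) ⊆ Set.center B)
    {φ : A →+* B} (hmaps : Set.MapsTo φ (Set.center A) (Set.center B)) :
    Function.Bijective φ ↔ Set.BijOn φ (Set.center A) (Set.center B) := by
  refine ⟨fun hbij ↦ ⟨hmaps, hbij.injective.injOn, fun b hb ↦ ?_⟩, fun hbij ↦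
    ⟨h.injective_of_injOn_center hp hpA hcent hbij.injOn,
      h.surjective_of_surjOn_center h' hp hpA hcent hcent' hmaps hbij.surjOn⟩⟩
  obtain ⟨a, rfl⟩ := hbij.surjective b
  exact ⟨a, (MulEquivClass.apply_mem_center_iff (RingEquiv.ofBijective φ hbij)).1 hb, rfl⟩

theorem pow_mem_center (h : IsWeylFamily X D) (hp : p ≠ 0) (hpT : (p : T) = 0)
    (hgen : Algebra.adjoin T (Set.range (Sum.elim X D)) = ⊤) (k : ι ⊕ ι) :
    Sum.elim X D k ^ p ∈ Set.center A := by
  have hpA : (p : A) = 0 := by rw [← map_natCast (algebraMap T A), hpT, map_zero]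
  exact centralizer_subset_center_of_adjoin_eq_top hgen (h.pow_mem_centralizer hp hpA k)

theorem center_eq_adjoin_range_pow [Finite ι] (h : IsWeylFamily X D) (hp : p.Prime)
    (hpT : (p : T) = 0) (hgen : Algebra.adjoin T (Set.range (Sum.elim X D)) = ⊤) :
    Set.center A = Algebra.adjoin T (Set.range fun k ↦ Sum.elim X D k ^ p) := by
  cases nonempty_fintype ι
  set C := Algebra.adjoin T (Set.range fun k ↦ Sum.elim X D k ^ p)
  have hpow := h.pow_mem_center hp.ne_zero hpT hgen
  have hpowC k : Sum.elim X D k ^ p ∈ C := Algebra.subset_adjoin ⟨k, rfl⟩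
  have hC : C ≤ Subalgebra.center T A := Algebra.adjoin_le (Set.range_subset_iff.2 hpow)
  have hle : commonKer (weylDeriv T X D) Finset.univ ≤ C.toSubmodule := by
    refine (h.isHeisenbergFamily hp hpT hpow).commonKer_univ_le_of_forall_eq_top hp hpT ?_ ?_ ?_
    · exact fun a ha ↦ mem_commonKer_weylDeriv.2 (Set.center_subset_centralizer _ (hC ha))
    · rintro (i | i) a ha
      · simpa [weylMul, LinearMap.pow_mulLeft] using C.mul_mem (hpowC (.inl i)) ha
      · simpa [weylMul, LinearMap.pow_mulRight] using C.mul_mem ha (hpowC (.inr i))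
    · intro N' hCN' hmul hderiv
      refine eq_top_of_mulLeft_mem_invtSubmodule hgen (hCN' C.one_mem) (Set.forall_mem_range.2 ?_)
      rintro (i | i)
      · exact hmul (.inl i)
      · intro a ha
        have := N'.add_mem (hderiv (.inl i) ha) (hmul (.inr i) ha)
        simpa [weylDeriv, weylMul, commutatorEnd_apply] using this
  exact Set.Subset.antisymm
    (fun a ha ↦ hle (mem_commonKer_weylDeriv.2 (Set.center_subset_centralizer _ ha))) hC

end IsWeylFamily

end WeylFamily

section WeylAlgebra

variable (R : Type*) [CommRing R] (n p : ℕ)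

theorem isWeylFamily_wX_wD : IsWeylFamily (wX R (n := n)) (wD R (n := n)) where
  commute_X i j := by
    simpa only [map_mul, commute_iff_eq, wX, wD] using
      RingQuot.mkAlgHom_rel R (WeylRel.xx (R := R) i j)
  commute_D i j := by
    simpa only [map_mul, commute_iff_eq, wX, wD] using
      RingQuot.mkAlgHom_rel R (WeylRel.dd (R := R) i j)
  commute_D_X {i j} hij := by
    simpa [hij, commute_iff_eq, wX, wD] using RingQuot.mkAlgHom_rel R (WeylRel.dx (R := R) i j)
  D_mul_X i := by
    simpa [wX, wD] using RingQuot.mkAlgHom_rel R (WeylRel.dx (R := R) i i)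

theorem adjoin_range_wX_wD_eq_top :
    Algebra.adjoin R (Set.range (Sum.elim (wX R (n := n)) (wD R (n := n)))) = ⊤ := by
  have hrange : Set.range (Sum.elim (wX R (n := n)) (wD R (n := n))) =
      RingQuot.mkAlgHom R (WeylRel R n) '' Set.range (FreeAlgebra.ι R) := by
    rw [← Set.range_comp]
    congr 1
    ext (i | i) <;> rfl
  rw [hrange, ← AlgHom.map_adjoin, FreeAlgebra.adjoin_range_ι, Algebra.map_top,
    AlgHom.range_eq_top]
  exact RingQuot.mkAlgHom_surjective R _

theorem range_pow_eq_pPowSet :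
    (Set.range fun k ↦ Sum.elim (wX R (n := n)) (wD R (n := n)) k ^ p) = pPowSet R n p := by
  rw [pPowSet, ← Set.Sum.elim_range]
  congr 1
  ext (i | i) <;> rfl

theorem center_weylAlgebra_eq_adjoin (hp : p.Prime) [CharP R p] :
    Set.center (WeylAlgebra R n) = Algebra.adjoin R (pPowSet R n p) := by
  rw [← range_pow_eq_pPowSet]
  exact (isWeylFamily_wX_wD R n).center_eq_adjoin_range_pow hp (CharP.cast_eq_zero R p)
    (adjoin_range_wX_wD_eq_top R n)

end WeylAlgebra

theorem weylAlgebra_endomorphism_iso_iff_center_restriction_iso_general {R S : Type*} [CommRing R]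
    [CommRing S] {n p : ℕ} (hp : p.Prime) [CharP R p] [CharP S p]
    (φ : WeylAlgebra R n →+* WeylAlgebra S n)
    (hmap : ∀ a ∈ Algebra.adjoin R (pPowSet R n p), φ a ∈ Algebra.adjoin S (pPowSet S n p)) :
    Function.Bijective φ ↔
      Function.Bijective (fun c : Algebra.adjoin R (pPowSet R n p) =>
        (⟨φ c, hmap c c.2⟩ : Algebra.adjoin S (pPowSet S n p))) := by
  have hpA : (p : WeylAlgebra R n) = 0 := by
    rw [← map_natCast (algebraMap R _), CharP.cast_eq_zero, map_zero]
  have hmaps :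
      Set.MapsTo φ (Algebra.adjoin R (pPowSet R n p)) (Algebra.adjoin S (pPowSet S n p)) := hmap
  have hiff : Function.Bijective φ ↔
      Set.BijOn φ (Algebra.adjoin R (pPowSet R n p)) (Algebra.adjoin S (pPowSet S n p)) := by
    rw [← center_weylAlgebra_eq_adjoin R n p hp,
      ← center_weylAlgebra_eq_adjoin S n p hp] at hmaps ⊢
    exact (isWeylFamily_wX_wD R n).bijective_iff_bijOn_center (isWeylFamily_wX_wD S n) hp hpA
      (centralizer_subset_center_of_adjoin_eq_top (adjoin_range_wX_wD_eq_top R n))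
      (centralizer_subset_center_of_adjoin_eq_top (adjoin_range_wX_wD_eq_top S n)) hmaps
  rw [hiff]
  exact ⟨fun h ↦ h.bijective, fun h ↦
    ⟨hmaps, hmaps.restrict_inj.1 h.injective, hmaps.restrict_surjective_iff.1 h.surjective⟩⟩

/-- Let `R` be a commutative ring of prime characteristic `p`, `A = A_n(R)`
the `n`-th Weyl algebra and `C = R[x_1^p, …, x_n^p, ∂_1^p, …, ∂_n^p]` its center.  An
`R`-algebra homomorphism `φ : A → A` is an isomorphism if and only if its restriction
`φ|_C : C → C` (which makes sense since `φ(C) ⊆ C`) is an isomorphism. -/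
theorem weylAlgebra_endomorphism_iso_iff_center_restriction_iso (R : Type*) [CommRing R]
    (n p : ℕ) (hp : p.Prime) [CharP R p]
    (φ : WeylAlgebra R n →ₐ[R] WeylAlgebra R n)
    (hmap : ∀ a ∈ Algebra.adjoin R (pPowSet R n p), φ a ∈ Algebra.adjoin R (pPowSet R n p)) :
    Function.Bijective φ ↔
      Function.Bijective (fun c : Algebra.adjoin R (pPowSet R n p) =>
        (⟨φ c, hmap c c.2⟩ : Algebra.adjoin R (pPowSet R n p))) :=
  weylAlgebra_endomorphism_iso_iff_center_restriction_iso_general hp φ.toRingHom hmap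
end
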